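/- Let q_max(m) denote the maximum, over all solvable networks with at most m nodes, at most m edges and at most m source messages, of the minimum alphabet size for which the network is solvable. Then there does not exist any computable function f : ℤ≥1 → ℤ≥2 satisfying q_max(m) = O(f(m)) as m → ∞. -/

import Mathlib

open scoped Classical

noncomputable section

/-- The probability of the event `S` under the probability mass function `p`. -/
def Pr {Ω : Type} (p : Ω → ℝ) (S : Set Ω) : ℝ := ∑' ω : S, p ω

/-- `p` is a probability mass function on the sample space `Ω`. -/
def IsProb {Ω : Type} (p : Ω → ℝ) : Prop := (∀ ω, 0 ≤ p ω) ∧ Pr p Set.univ = 1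

/-- The support of a random variable `X`: the set of values attained with positive
probability. -/
def supp {Ω α : Type} (p : Ω → ℝ) (X : Ω → α) : Set α := {a | 0 < Pr p {ω | X ω = a}}

/-- `X` is almost surely a function of `Y` (written `X ≤ι Y` in the paper). -/
def FuncOf {Ω α β : Type} (p : Ω → ℝ) (X : Ω → α) (Y : Ω → β) : Prop :=
  ∃ f : β → α, Pr p {ω | X ω = f (Y ω)} = 1

/-- The random variables `X` and `Y` are independent. -/
def IndepRV {Ω α β : Type} (p : Ω → ℝ) (X : Ω → α) (Y : Ω → β) : Prop :=
  ∀ (a : α) (b : β), Pr p {ω | X ω = a ∧ Y ω = b} = Pr p {ω | X ω = a} * Pr p {ω | Y ω = b}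

/-- The random variables `X`, `Y`, `Z` are mutually independent:
`X ⟂ Y` and `(X, Y) ⟂ Z`. -/
def Indep3 {Ω α β γ : Type} (p : Ω → ℝ) (X : Ω → α) (Y : Ω → β) (Z : Ω → γ) : Prop :=
  IndepRV p X Y ∧ IndepRV p (fun ω => (X ω, Y ω)) Z

/-- The predicate `tri(X, Y, Z)`: each variable is a.s. a function of the other two, and the
three variables are pairwise independent. -/
def tri {Ω α β γ : Type} (p : Ω → ℝ) (X : Ω → α) (Y : Ω → β) (Z : Ω → γ) : Prop :=
  FuncOf p X (fun ω => (Y ω, Z ω)) ∧ FuncOf p Y (fun ω => (X ω, Z ω)) ∧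
    FuncOf p Z (fun ω => (X ω, Y ω)) ∧
    IndepRV p X Y ∧ IndepRV p X Z ∧ IndepRV p Y Z


/-- A network coding instance: `(n, s, edges, acc, dem)` where `n` is the number of nodes
(nodes are `0, …, n−1`), `s` is the number of source messages (messages are `0, …, s−1`),
`edges` is the list of directed edges of the multigraph (edges are indexed by their
position in the list), `acc` lists, for each node `v`, the set `C_v` of message indices
the node has access to, and `dem` lists, for each node `v`, the set `D_v` of message
indices the node demands. -/
abbrev Network : Type := ℕ × ℕ × List (ℕ × ℕ) × List (List ℕ) × List (List ℕ)

/-- The indices of the edges coming into node `v`. -/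
def inEdges (edges : List (ℕ × ℕ)) (v : ℕ) : List ℕ :=
  (List.range edges.length).filter fun e => (edges.getD e (0, 0)).2 = v

/-- The indices of the edges going out of node `v`. -/
def outEdges (edges : List (ℕ × ℕ)) (v : ℕ) : List ℕ :=
  (List.range edges.length).filter fun e => (edges.getD e (0, 0)).1 = v

/-- The network is valid: the edges join existing nodes, the directed multigraph is
acyclic (it admits a topological ranking), and the access/demand lists assign a set of
existing message indices to each node. -/
def NetworkValid : Network → Prop := fun net =>
  match net with
  | (n, s, edges, acc, dem) =>
    (∀ e ∈ edges, e.1 < n ∧ e.2 < n) ∧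
    (∃ rank : ℕ → ℕ, ∀ e ∈ edges, rank e.1 < rank e.2) ∧
    acc.length = n ∧ dem.length = n ∧
    (∀ l ∈ acc, ∀ i ∈ l, i < s) ∧ (∀ l ∈ dem, ∀ i ∈ l, i < s)

/-- The network is solvable with alphabet size `q`: there are a probability space, source
messages `M_0, …, M_{s−1}` that are i.i.d. uniform with cardinality `q`, and signals
`X_e` of cardinality at most `q` along the edges, such that at every node `v` the pair
`(M_{D_v}, X_{out(v)})` is almost surely a function of `(M_{C_v}, X_{in(v)})`. -/
def SolvableWith : Network → ℕ → Prop := fun net q =>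
  match net with
  | (n, s, edges, acc, dem) =>
    ∃ (Ω : Type) (p : Ω → ℝ), IsProb p ∧
      ∃ (M : ℕ → Ω → Fin q) (X : ℕ → Ω → Fin q),
        (∀ m : ℕ → Fin q,
          Pr p {ω | ∀ i < s, M i ω = m i} = ((q : ℝ))⁻¹ ^ s) ∧
        ∀ v < n, FuncOf p
          (fun ω => (((dem.getD v []).map fun i => M i ω),
                     (outEdges edges v).map fun e => X e ω))
          (fun ω => (((acc.getD v []).map fun i => M i ω),
                     (inEdges edges v).map fun e => X e ω))

/-- The network is solvable: it is solvable with some alphabet size `q ≥ 2`. -/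
def Solvable (net : Network) : Prop := ∃ q, 2 ≤ q ∧ SolvableWith net q

/-- The minimum alphabet size of a (solvable) network: the least `q ≥ 2` for which the
network is solvable with alphabet size `q`. -/
def minAlphabet (net : Network) : ℕ := sInf {q | 2 ≤ q ∧ SolvableWith net q}

/-- The network has at most `m` nodes, at most `m` edges, and at most `m` source
messages. -/
def NetworkSizeLE : Network → ℕ → Prop := fun net m =>
  match net with
  | (n, s, edges, _, _) => n ≤ m ∧ edges.length ≤ m ∧ s ≤ m

/-- `qMax m`: the maximum, over all solvable (valid) networks with at most `m` nodes,
`m` edges and `m` source messages, of the minimum alphabet size for which the network is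
solvable. -/
def qMax (m : ℕ) : ℕ :=
  sSup {q | ∃ net : Network, NetworkValid net ∧ NetworkSizeLE net m ∧ Solvable net ∧
    q = minAlphabet net}

/-! ### Basic facts about probabilities -/

lemma Pr_eq_tsum {Ω : Type} (p : Ω → ℝ) (S : Set Ω) :
    Pr p S = ∑' ω, S.indicator p ω := by
  unfold Pr; exact tsum_subtype S p

lemma IsProb.summable {Ω : Type} {p : Ω → ℝ} (h : IsProb p) : Summable p := by
  by_contra hs
  have h1 := h.2
  rw [Pr_eq_tsum, Set.indicator_univ, tsum_eq_zero_of_not_summable hs] at h1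
  exact zero_ne_one h1

lemma mem_of_Pr_one {Ω : Type} {p : Ω → ℝ} (h : IsProb p) {S : Set Ω} (hS : Pr p S = 1)
    {ω : Ω} (hω : 0 < p ω) : ω ∈ S := by
  by_contra hn
  have h1 := h.2
  have hs := h.summable
  rw [Pr_eq_tsum] at h1 hS
  rw [Set.indicator_univ] at h1
  have h2 : ∑' ω, S.indicator p ω < ∑' ω, p ω := by
    refine Summable.tsum_lt_tsum (i := ω) ?_ ?_ (hs.indicator S) hs
    · intro x; exact Set.indicator_le_self' (fun _ _ => h.1 _) x
    · rw [Set.indicator_of_notMem hn]; exact hω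
  linarith

lemma exists_of_Pr_pos {Ω : Type} {p : Ω → ℝ} (h : IsProb p) {S : Set Ω} (hS : 0 < Pr p S) :
    ∃ ω ∈ S, 0 < p ω := by
  by_contra hn
  push Not at hn
  have : ∀ ω, S.indicator p ω = 0 := by
    intro ω
    by_cases hω : ω ∈ S
    · rw [Set.indicator_of_mem hω]; exact le_antisymm (hn ω hω) (h.1 ω)
    · exact Set.indicator_of_notMem hω _
  rw [Pr_eq_tsum] at hS
  simp [this] at hS

lemma funcOf_of_factors {Ω α β : Type} {p : Ω → ℝ} (hp : IsProb p) (hα : Nonempty α)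
    {X : Ω → α} {Y : Ω → β} (h : ∀ ω ω', Y ω = Y ω' → X ω = X ω') : FuncOf p X Y := by
  obtain ⟨a⟩ := hα
  refine ⟨Function.extend Y X (fun _ => a), ?_⟩
  have hall : {ω | X ω = Function.extend Y X (fun _ => a) (Y ω)} = Set.univ := by
    ext ω
    simp only [Set.mem_ofPred_eq, Set.mem_univ, iff_true]
    exact (Function.FactorsThrough.extend_apply (fun a b h' => h a b h') (fun _ => a) ω).symm
  rw [hall]; exact hp.2

/-- A combinatorial (abstract) network. -/
structure ANet where
  ν : Type
  μ : Type
  [fν : Fintype ν]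
  [fμ : Fintype μ]
  E : Finset (ν × ν)
  acc : ν → Finset μ
  dem : ν → Finset μ
  rank : ν → ℕ
  hrank : ∀ e ∈ E, rank e.1 < rank e.2

attribute [instance] ANet.fν ANet.fμ

namespace ANet
variable (A : ANet)

/-- Functional solvability. -/
def Sol (Q : Type) : Prop :=
  ∃ X : A.ν × A.ν → (A.μ → Q) → Q, ∀ v m m', (∀ a ∈ A.acc v, m a = m' a) →
    (∀ e ∈ A.E, e.2 = v → X e m = X e m') →
    (∀ a ∈ A.dem v, m a = m' a) ∧ (∀ e ∈ A.E, e.1 = v → X e m = X e m')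

def en : A.ν ≃ Fin (Fintype.card A.ν) := Fintype.equivFin _
def em : A.μ ≃ Fin (Fintype.card A.μ) := Fintype.equivFin _

def edgeL : List (ℕ × ℕ) := A.E.toList.map fun e => ((A.en e.1 : ℕ), (A.en e.2 : ℕ))

def lst (f : A.ν → Finset A.μ) : List (List ℕ) :=
  List.ofFn fun i => (f (A.en.symm i)).toList.map fun a => (A.em a : ℕ)

def net : Network :=
  (Fintype.card A.ν, Fintype.card A.μ, A.edgeL, A.lst A.acc, A.lst A.dem)

lemma lst_getD (f : A.ν → Finset A.μ) (v : A.ν) :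
    (A.lst f).getD (A.en v) [] = (f v).toList.map fun a => (A.em a : ℕ) := by
  unfold lst
  rw [List.getD_eq_getElem _ _ (by simp)]
  simp

lemma valid : NetworkValid A.net := by
  unfold net NetworkValid
  refine ⟨?_, ?_, ?_, ?_, ?_, ?_⟩
  · intro e he
    simp only [edgeL, List.mem_map] at he
    obtain ⟨e', -, rfl⟩ := he
    exact ⟨(A.en _).2, (A.en _).2⟩
  · refine ⟨fun i => if h : i < Fintype.card A.ν then A.rank (A.en.symm ⟨i, h⟩) else 0, ?_⟩
    intro e he
    simp only [edgeL, List.mem_map, Finset.mem_toList] at he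
    obtain ⟨e', h', rfl⟩ := he
    simpa using A.hrank e' h'
  · simp [lst]
  · simp [lst]
  · intro l hl i hi
    simp only [lst, List.mem_ofFn] at hl
    obtain ⟨j, rfl⟩ := hl
    simp only [List.mem_map] at hi
    obtain ⟨a, -, rfl⟩ := hi
    exact (A.em _).2
  · intro l hl i hi
    simp only [lst, List.mem_ofFn] at hl
    obtain ⟨j, rfl⟩ := hl
    simp only [List.mem_map] at hi
    obtain ⟨a, -, rfl⟩ := hi
    exact (A.em _).2

lemma edgeL_length : A.edgeL.length = A.E.card := by simp [edgeL]

lemma edgeL_getD {i : ℕ} (h : i < A.E.toList.length) :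
    A.edgeL.getD i (0, 0) = ((A.en (A.E.toList[i]).1 : ℕ), (A.en (A.E.toList[i]).2 : ℕ)) := by
  unfold edgeL
  rw [List.getD_eq_getElem _ _ (by simpa using h)]
  simp

lemma mem_inEdges (v : A.ν) (i : ℕ) :
    i ∈ inEdges A.edgeL (A.en v) ↔ ∃ h : i < A.E.toList.length, (A.E.toList[i]).2 = v := by
  simp only [inEdges, List.mem_filter, List.mem_range, decide_eq_true_eq]
  constructor
  · rintro ⟨h1, h2⟩
    have h : i < A.E.toList.length := by simpa [edgeL] using h1
    refine ⟨h, ?_⟩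
    rw [A.edgeL_getD h] at h2
    exact A.en.injective (Fin.ext h2)
  · rintro ⟨h, h2⟩
    refine ⟨by simpa [edgeL] using h, ?_⟩
    rw [A.edgeL_getD h, h2]

lemma mem_outEdges (v : A.ν) (i : ℕ) :
    i ∈ outEdges A.edgeL (A.en v) ↔ ∃ h : i < A.E.toList.length, (A.E.toList[i]).1 = v := by
  simp only [outEdges, List.mem_filter, List.mem_range, decide_eq_true_eq]
  constructor
  · rintro ⟨h1, h2⟩
    have h : i < A.E.toList.length := by simpa [edgeL] using h1
    refine ⟨h, ?_⟩
    rw [A.edgeL_getD h] at h2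
    exact A.en.injective (Fin.ext h2)
  · rintro ⟨h, h2⟩
    refine ⟨by simpa [edgeL] using h, ?_⟩
    rw [A.edgeL_getD h, h2]

lemma sol_of_solvableWith {q : ℕ} (hq : 1 ≤ q) (h : SolvableWith A.net q) : A.Sol (Fin q) := by
  unfold net SolvableWith at h
  obtain ⟨Ω, p, hp, M, X, hM, hF⟩ := h
  have : NeZero q := ⟨by omega⟩
  let ext : (A.μ → Fin q) → ℕ → Fin q := fun m i =>
    if h : i < Fintype.card A.μ then m (A.em.symm ⟨i, h⟩) else 0
  have hsec : ∀ m : A.μ → Fin q, ∃ ω, (∀ a, M (A.em a) ω = m a) ∧ 0 < p ω := by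
    intro m
    have h1 := hM (ext m)
    have h2 : 0 < Pr p {ω | ∀ i < Fintype.card A.μ, M i ω = ext m i} := by
      rw [h1]; have : (0:ℝ) < q := by exact_mod_cast hq
      positivity
    obtain ⟨ω, hω, hpos⟩ := exists_of_Pr_pos hp h2
    refine ⟨ω, fun a => ?_, hpos⟩
    have := hω (A.em a) (A.em a).2
    simpa [ext] using this
  choose w hw hwp using hsec
  refine ⟨fun e m => X (A.E.toList.idxOf e) (w m), ?_⟩
  intro v m m' hacc hin
  obtain ⟨f, hf⟩ := hF (A.en v) (A.en v).2
  have e1 := mem_of_Pr_one hp hf (hwp m)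
  have e2 := mem_of_Pr_one hp hf (hwp m')
  simp only [Set.mem_ofPred_eq, lst_getD, List.map_map] at e1 e2
  have hidx : ∀ i (h : i < A.E.toList.length), A.E.toList.idxOf A.E.toList[i] = i := by
    intro i h
    exact (Finset.nodup_toList A.E).idxOf_getElem i h
  have ea : ((A.acc v).toList.map ((fun i => M i (w m)) ∘ fun a => (A.em a : ℕ))) =
      ((A.acc v).toList.map ((fun i => M i (w m')) ∘ fun a => (A.em a : ℕ))) := by
    refine List.map_congr_left fun a ha => ?_
    simp only [Function.comp, hw]
    exact hacc a (Finset.mem_toList.1 ha)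
  have ei : ((inEdges A.edgeL (A.en v)).map fun e => X e (w m)) =
      ((inEdges A.edgeL (A.en v)).map fun e => X e (w m')) := by
    refine List.map_congr_left fun i hi => ?_
    obtain ⟨h, h2⟩ := (A.mem_inEdges v i).1 hi
    have := hin _ (Finset.mem_toList.1 (List.getElem_mem h)) h2
    simpa only [hidx i h] using this
  rw [ea, ei, ← e2, Prod.mk.injEq] at e1
  obtain ⟨d1, d2⟩ := e1
  refine ⟨fun a ha => ?_, fun e he hev => ?_⟩
  · have := List.map_inj_left.1 d1 a (Finset.mem_toList.2 ha)
    simpa [hw] using this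
  · have hlt : A.E.toList.idxOf e < A.E.toList.length :=
      List.idxOf_lt_length_of_mem (Finset.mem_toList.2 he)
    refine List.map_inj_left.1 d2 (A.E.toList.idxOf e) ?_
    rw [mem_outEdges]
    refine ⟨hlt, ?_⟩
    rw [List.getElem_idxOf]; exact hev

lemma solvableWith_of_sol {q : ℕ} (hq : 1 ≤ q) (h : A.Sol (Fin q)) : SolvableWith A.net q := by
  obtain ⟨X, hX⟩ := h
  have : NeZero q := ⟨by omega⟩
  have hq0 : (q : ℝ) ≠ 0 := by exact_mod_cast (by omega : q ≠ 0)
  unfold net SolvableWith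
  have hprob : IsProb (fun _ : A.μ → Fin q => ((q : ℝ))⁻¹ ^ Fintype.card A.μ) := by
    refine ⟨fun _ => by positivity, ?_⟩
    rw [Pr_eq_tsum, Set.indicator_univ, tsum_fintype]
    simp [hq0]
  refine ⟨A.μ → Fin q, fun _ => ((q : ℝ))⁻¹ ^ Fintype.card A.μ, hprob,
    fun i ω => if h : i < Fintype.card A.μ then ω (A.em.symm ⟨i, h⟩) else 0,
    fun i ω => if h : i < A.E.toList.length then X (A.E.toList[i]) ω else 0, ?_, ?_⟩
  · intro m
    have : {ω : A.μ → Fin q | ∀ i < Fintype.card A.μ,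
        (if h : i < Fintype.card A.μ then ω (A.em.symm ⟨i, h⟩) else 0) = m i} =
        {fun a => m (A.em a)} := by
      ext ω
      simp only [Set.mem_ofPred_eq, Set.mem_singleton_iff]
      constructor
      · intro h; funext a
        have := h (A.em a) (A.em a).2
        simpa using this
      · rintro rfl i hi
        simp [hi]
    rw [this, Pr_eq_tsum, tsum_fintype]
    rw [Finset.sum_eq_single (fun a => m (A.em a))]
    · simp
    · intro b _ hb
      simp [hb]
    · simp
  · intro v hv
    obtain ⟨v, rfl⟩ : ∃ v', v = A.en v' := ⟨A.en.symm ⟨v, hv⟩, by simp⟩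
    simp only [lst_getD, List.map_map]
    refine funcOf_of_factors hprob ⟨([], [])⟩ ?_
    · intro m m' hmm
      simp only [Prod.mk.injEq] at hmm ⊢
      obtain ⟨h1, h2⟩ := hmm
      obtain ⟨r1, r2⟩ := hX v m m' (fun a ha => by
          simpa using List.map_inj_left.1 h1 a (Finset.mem_toList.2 ha)) (fun e he hev => by
          have hlt : A.E.toList.idxOf e < A.E.toList.length :=
            List.idxOf_lt_length_of_mem (Finset.mem_toList.2 he)
          have := List.map_inj_left.1 h2 (A.E.toList.idxOf e) (by
            rw [mem_inEdges]
            exact ⟨hlt, by rw [List.getElem_idxOf]; exact hev⟩)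
          simp only [hlt, dite_true, List.getElem_idxOf] at this
          exact this)
      refine ⟨List.map_congr_left fun a ha => ?_, List.map_congr_left fun i hi => ?_⟩
      · simpa using r1 a (Finset.mem_toList.1 ha)
      · obtain ⟨h, h3⟩ := (A.mem_outEdges v i).1 hi
        simp only [h, dite_true]
        exact r2 _ (Finset.mem_toList.1 (List.getElem_mem h)) h3

end ANet

/-- A demand system: messages `μ`, derived signals `δ`, checks `χ`. -/
structure DSys where
  μ : Type
  δ : Type
  χ : Type
  [fμ : Fintype μ]
  [fδ : Fintype δ]
  [fχ : Fintype χ]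
  accP : δ → Set μ
  inP : δ → Set δ
  rk : δ → ℕ
  hrk : ∀ j, ∀ i ∈ inP j, rk i < rk j
  accD : χ → Set μ
  inD : χ → Set δ
  tgt : χ → μ

attribute [instance] DSys.fμ DSys.fδ DSys.fχ

namespace DSys
variable (S : DSys)

/-- Solvability of a demand system over the alphabet `Q`. -/
def Sol (Q : Type) : Prop := ∃ Y : S.δ → (S.μ → Q) → Q,
  (∀ j m m', (∀ a ∈ S.accP j, m a = m' a) → (∀ i ∈ S.inP j, Y i m = Y i m') →
    Y j m = Y j m') ∧
  (∀ k m m', (∀ a ∈ S.accD k, m a = m' a) → (∀ i ∈ S.inD k, Y i m = Y i m') →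
    m (S.tgt k) = m' (S.tgt k))

/-- Adjacency of the associated network. Nodes are producers, relays and checks. -/
def adj : S.δ ⊕ S.δ ⊕ S.χ → S.δ ⊕ S.δ ⊕ S.χ → Prop
  | .inl j, .inr (.inl i) => i = j
  | .inr (.inl i), .inl j => i ∈ S.inP j
  | .inr (.inl i), .inr (.inr k) => i ∈ S.inD k
  | _, _ => False

def accF : S.δ ⊕ S.δ ⊕ S.χ → Set S.μ
  | .inl j => S.accP j
  | .inr (.inl _) => ∅
  | .inr (.inr k) => S.accD k

def demF : S.δ ⊕ S.δ ⊕ S.χ → Set S.μ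
  | .inl _ => ∅
  | .inr (.inl _) => ∅
  | .inr (.inr k) => {S.tgt k}

def rankF : S.δ ⊕ S.δ ⊕ S.χ → ℕ
  | .inl j => 2 * S.rk j
  | .inr (.inl j) => 2 * S.rk j + 1
  | .inr (.inr _) => 2 * (∑ j, S.rk j) + 2

def toANet : ANet where
  ν := S.δ ⊕ S.δ ⊕ S.χ
  μ := S.μ
  E := Finset.univ.filter fun e => S.adj e.1 e.2
  acc v := Finset.univ.filter fun a => a ∈ S.accF v
  dem v := Finset.univ.filter fun a => a ∈ S.demF v
  rank := S.rankF
  hrank := by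
    rintro ⟨a, b⟩ h
    simp only [Finset.mem_filter, Finset.mem_univ, true_and] at h
    rcases a with a | a | a <;> rcases b with b | b | b <;> simp only [adj] at h
    · subst h; simp [rankF]
    · have := S.hrk _ _ h
      simp only [rankF]; omega
    · have : S.rk a ≤ ∑ j, S.rk j :=
        Finset.single_le_sum (f := S.rk) (fun _ _ => Nat.zero_le _) (Finset.mem_univ a)
      simp only [rankF]; omega

lemma mem_E (a b : S.δ ⊕ S.δ ⊕ S.χ) :
    ((a, b) : S.toANet.ν × S.toANet.ν) ∈ S.toANet.E ↔ S.adj a b := by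
  have : ((a, b) : (S.δ ⊕ S.δ ⊕ S.χ) × (S.δ ⊕ S.δ ⊕ S.χ)) ∈
    (Finset.univ.filter fun e => S.adj e.1 e.2) ↔ S.adj a b := by simp
  exact this

lemma mem_acc (v : S.δ ⊕ S.δ ⊕ S.χ) (a : S.μ) : a ∈ S.toANet.acc v ↔ a ∈ S.accF v := by
  have : a ∈ (Finset.univ.filter fun a => a ∈ S.accF v) ↔ a ∈ S.accF v := by simp
  exact this

lemma mem_dem (v : S.δ ⊕ S.δ ⊕ S.χ) (a : S.μ) : a ∈ S.toANet.dem v ↔ a ∈ S.demF v := by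
  have : a ∈ (Finset.univ.filter fun a => a ∈ S.demF v) ↔ a ∈ S.demF v := by simp
  exact this

lemma toANet_sol (Q : Type) : S.toANet.Sol Q ↔ S.Sol Q := by
  constructor
  · rintro ⟨X, hX⟩
    have hcopy : ∀ (i : S.δ) (w : S.δ ⊕ S.δ ⊕ S.χ), S.adj (.inr (.inl i)) w → ∀ m m',
        X (.inl i, .inr (.inl i)) m = X (.inl i, .inr (.inl i)) m' →
        X (.inr (.inl i), w) m = X (.inr (.inl i), w) m' := by
      intro i w hw m m' h
      refine (hX (.inr (.inl i)) m m' ?_ ?_).2 (.inr (.inl i), w) ?_ rfl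
      · intro a ha; exact ((S.mem_acc _ a).1 ha).elim
      · rintro ⟨e1, e2⟩ he hev
        have hev : e2 = _ := hev
        subst hev
        replace he := (S.mem_E _ _).1 he
        rcases e1 with a | a | a <;> simp only [adj] at he
        subst he; exact h
      · exact (S.mem_E _ _).2 hw
    refine ⟨fun i => X (.inl i, .inr (.inl i)), ?_, ?_⟩
    · intro j m m' hacc hin
      refine (hX (.inl j) m m' ?_ ?_).2 (.inl j, .inr (.inl j)) ?_ rfl
      · intro a ha; exact hacc a ((S.mem_acc _ a).1 ha)
      · rintro ⟨e1, e2⟩ he hev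
        have hev : e2 = _ := hev
        subst hev
        replace he := (S.mem_E _ _).1 he
        rcases e1 with a | a | a <;> simp only [adj] at he
        exact hcopy a (.inl j) he m m' (hin a he)
      · exact (S.mem_E _ _).2 rfl
    · intro k m m' hacc hin
      refine (hX (.inr (.inr k)) m m' ?_ ?_).1 (S.tgt k) ?_
      · intro a ha; exact hacc a ((S.mem_acc _ a).1 ha)
      · rintro ⟨e1, e2⟩ he hev
        have hev : e2 = _ := hev
        subst hev
        replace he := (S.mem_E _ _).1 he
        rcases e1 with a | a | a <;> simp only [adj] at he
        exact hcopy a (.inr (.inr k)) he m m' (hin a he)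
      · exact (S.mem_dem _ _).2 rfl
  · rintro ⟨Y, hP, hD⟩
    refine ⟨fun e m => match e.1 with
      | .inl j => Y j m
      | .inr (.inl j) => Y j m
      | .inr (.inr k) => m (S.tgt k), ?_⟩
    intro v m m' hacc hin
    rcases v with j | j | k
    · refine ⟨fun a ha => ((S.mem_dem _ a).1 ha).elim, ?_⟩
      rintro ⟨e1, e2⟩ he hev
      have hev : e1 = _ := hev
      subst hev
      refine hP j m m' (fun a ha => hacc a ((S.mem_acc _ a).2 ha)) (fun i hi => ?_)
      exact hin (.inr (.inl i), .inl j) ((S.mem_E _ _).2 hi) rfl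
    · refine ⟨fun a ha => ((S.mem_dem _ a).1 ha).elim, ?_⟩
      rintro ⟨e1, e2⟩ he hev
      have hev : e1 = _ := hev
      subst hev
      exact hin (.inl j, .inr (.inl j)) ((S.mem_E _ _).2 rfl) rfl
    · refine ⟨fun a ha => ?_, ?_⟩
      · have ha : a = S.tgt k := (S.mem_dem _ a).1 ha
        subst ha
        refine hD k m m' (fun a ha => hacc a ((S.mem_acc _ a).2 ha)) (fun i hi => ?_)
        exact hin (.inr (.inl i), .inr (.inr k)) ((S.mem_E _ _).2 hi) rfl
      · rintro ⟨e1, e2⟩ he hev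
        have hev : e1 = _ := hev
        subst hev
        replace he := (S.mem_E _ _).1 he
        simp [adj] at he

/-- Size measure of a demand system. -/
def size : ℕ := 2 * Fintype.card S.δ + Fintype.card S.χ + Fintype.card S.μ

theorem exists_network : ∃ net : Network, NetworkValid net ∧ NetworkSizeLE net (S.size ^ 2) ∧
    ∀ q, 1 ≤ q → (SolvableWith net q ↔ S.Sol (Fin q)) := by
  refine ⟨S.toANet.net, S.toANet.valid, ?_, ?_⟩
  · have hν : Fintype.card S.toANet.ν ≤ S.size := by
      have : Fintype.card S.toANet.ν = Fintype.card (S.δ ⊕ S.δ ⊕ S.χ) :=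
        Fintype.card_congr (Equiv.refl _)
      rw [this]; simp only [Fintype.card_sum, size]; omega
    have hμ : Fintype.card S.toANet.μ ≤ S.size := by
      have : Fintype.card S.toANet.μ = Fintype.card S.μ := Fintype.card_congr (Equiv.refl _)
      rw [this]; simp only [size]; omega
    have h2 : S.size ≤ S.size ^ 2 := Nat.le_self_pow (by norm_num) _
    refine ⟨hν.trans h2, ?_, hμ.trans h2⟩
    rw [ANet.edgeL_length]
    calc S.toANet.E.card ≤ Fintype.card (S.toANet.ν × S.toANet.ν) := Finset.card_le_univ _
      _ = Fintype.card S.toANet.ν ^ 2 := by rw [Fintype.card_prod, sq]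
      _ ≤ S.size ^ 2 := Nat.pow_le_pow_left hν 2
  · intro q hq
    rw [← toANet_sol]
    exact ⟨S.toANet.sol_of_solvableWith hq, S.toANet.solvableWith_of_sol hq⟩

end DSys

/-! ### Level A: systems of functional dependencies with pivots -/

/-- Functional dependency systems over base messages `β` and derived variables `ι`. -/
structure FSys where
  β : Type
  ι : Type
  κ : Type
  [fβ : Fintype β]
  [fι : Fintype ι]
  [fκ : Fintype κ]
  piv : ι → β → Prop
  hpiv : ∀ j, ∃ i, piv j i
  srcM : κ → Set β
  srcV : κ → Set ι
  tgt : κ → ι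

attribute [instance] FSys.fβ FSys.fι FSys.fκ

namespace FSys
variable (F : FSys)

/-- `Y` is a model of the functional dependency system. -/
def Model {Q : Type} (Y : F.ι → (F.β → Q) → Q) : Prop :=
  (∀ j i, F.piv j i → ∀ m m', (∀ b, b ≠ i → m b = m' b) → Y j m = Y j m' → m i = m' i) ∧
  (∀ k m m₂, (∀ b ∈ F.srcM k, m b = m₂ b) → (∀ j ∈ F.srcV k, Y j m = Y j m₂) →
    Y (F.tgt k) m = Y (F.tgt k) m₂)

/-- The demand system associated to a functional dependency system. -/
def toDSys : DSys where
  μ := F.β ⊕ F.ι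
  δ := F.ι ⊕ F.ι
  χ := (F.ι × F.β) ⊕ F.ι ⊕ (F.ι × F.β) ⊕ F.κ
  accP := Sum.elim (fun _ => Set.range Sum.inl) (fun j => {Sum.inr j})
  inP := Sum.elim (fun _ => ∅) (fun j => {Sum.inl j})
  rk := Sum.elim (fun _ => 0) (fun _ => 1)
  hrk := by rintro (j | j) i hi <;> simp at hi; subst hi; simp
  accD := Sum.elim (fun p => {a | ∃ b, a = Sum.inl b ∧ (F.piv p.1 p.2 → b ≠ p.2)})
    (Sum.elim (fun _ => ∅) (Sum.elim
      (fun p => {a | a = Sum.inr p.1 ∨ ∃ b, a = Sum.inl b ∧ (F.piv p.1 p.2 → b ≠ p.2)})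
      (fun k => Sum.inl '' F.srcM k)))
  inD := Sum.elim (fun p => {Sum.inl p.1})
    (Sum.elim (fun j => {Sum.inl j, Sum.inr j}) (Sum.elim
      (fun p => {Sum.inr p.1})
      (fun k => insert (Sum.inr (F.tgt k)) (Sum.inl '' F.srcV k))))
  tgt := Sum.elim (fun p => Sum.inl p.2)
    (Sum.elim (fun j => Sum.inr j) (Sum.elim
      (fun p => Sum.inl p.2)
      (fun k => Sum.inr (F.tgt k))))

lemma size_toDSys : F.toDSys.size ≤
    10 * (Fintype.card F.β + 1) * (Fintype.card F.ι + 1) + Fintype.card F.κ := by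
  have h1 : Fintype.card F.toDSys.δ = Fintype.card (F.ι ⊕ F.ι) := Fintype.card_congr (Equiv.refl _)
  have h2 : Fintype.card F.toDSys.μ = Fintype.card (F.β ⊕ F.ι) := Fintype.card_congr (Equiv.refl _)
  have h3 : Fintype.card F.toDSys.χ = Fintype.card ((F.ι × F.β) ⊕ F.ι ⊕ (F.ι × F.β) ⊕ F.κ) :=
    Fintype.card_congr (Equiv.refl _)
  simp only [DSys.size, h1, h2, h3, Fintype.card_sum, Fintype.card_prod]
  nlinarith [Nat.zero_le (Fintype.card F.ι * Fintype.card F.β)]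

lemma toDSys_sol_of_model {Q : Type} [AddCommGroup Q] (Y : F.ι → (F.β → Q) → Q)
    (h : F.Model Y) : F.toDSys.Sol Q := by
  obtain ⟨h1, h2⟩ := h
  let Z : F.ι ⊕ F.ι → (F.β ⊕ F.ι → Q) → Q := Sum.elim (fun j m => Y j (fun b => m (.inl b)))
    (fun j m => m (.inr j) + Y j (fun b => m (.inl b)))
  have hP : ∀ (j : F.ι ⊕ F.ι) (m m' : F.β ⊕ F.ι → Q), (∀ a ∈ F.toDSys.accP j, m a = m' a) →
      (∀ i ∈ F.toDSys.inP j, Z i m = Z i m') → Z j m = Z j m' := by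
    rintro (j | j) m m' ha hi
    · have : (fun b => m (.inl b)) = (fun b => m' (.inl b)) := by
        funext b; exact ha _ ⟨b, rfl⟩
      simp only [Z, Sum.elim_inl, this]
    · have e1 : m (.inr j) = m' (.inr j) := ha (.inr j) rfl
      have e2 : Y j (fun b => m (.inl b)) = Y j (fun b => m' (.inl b)) := hi (.inl j) rfl
      simp only [Z, Sum.elim_inr, e1, e2]
  have hD : ∀ (k : (F.ι × F.β) ⊕ F.ι ⊕ (F.ι × F.β) ⊕ F.κ) (m m' : F.β ⊕ F.ι → Q),
      (∀ a ∈ F.toDSys.accD k, m a = m' a) →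
      (∀ i ∈ F.toDSys.inD k, Z i m = Z i m') → m (F.toDSys.tgt k) = m' (F.toDSys.tgt k) := by
    rintro (⟨j, i⟩ | j | ⟨j, i⟩ | k) m m' ha hi
    · by_cases hp : F.piv j i
      · exact h1 j i hp (fun b => m (.inl b)) (fun b => m' (.inl b))
          (fun b hb => ha (.inl b) ⟨b, rfl, fun _ => hb⟩) (hi (.inl j) rfl)
      · exact ha (.inl i) ⟨i, rfl, fun h => absurd h hp⟩
    · have e1 : Y j (fun b => m (.inl b)) = Y j (fun b => m' (.inl b)) :=
        hi (.inl j) (Or.inl rfl)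
      have e2 : m (.inr j) + Y j (fun b => m (.inl b)) =
        m' (.inr j) + Y j (fun b => m' (.inl b)) := hi (.inr j) (Or.inr rfl)
      rw [e1] at e2
      exact add_right_cancel e2
    · have e1 : m (.inr j) = m' (.inr j) := ha (.inr j) (Or.inl rfl)
      have e2 : m (.inr j) + Y j (fun b => m (.inl b)) =
        m' (.inr j) + Y j (fun b => m' (.inl b)) := hi (.inr j) rfl
      rw [e1] at e2
      have e3 := add_left_cancel e2
      by_cases hp : F.piv j i
      · exact h1 j i hp (fun b => m (.inl b)) (fun b => m' (.inl b))
          (fun b hb => ha (.inl b) (Or.inr ⟨b, rfl, fun _ => hb⟩)) e3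
      · exact ha (.inl i) (Or.inr ⟨i, rfl, fun h => absurd h hp⟩)
    · have e2 : m (.inr (F.tgt k)) + Y (F.tgt k) (fun b => m (.inl b)) =
        m' (.inr (F.tgt k)) + Y (F.tgt k) (fun b => m' (.inl b)) :=
        hi (.inr (F.tgt k)) (Or.inl rfl)
      rw [h2 k (fun b => m (.inl b)) (fun b => m' (.inl b)) (fun b hb => ha (.inl b) ⟨b, hb, rfl⟩)
        (fun j hj => hi (.inl j) (Or.inr ⟨j, hj, rfl⟩))] at e2
      exact add_right_cancel e2
  exact ⟨Z, hP, hD⟩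

lemma model_of_toDSys_sol {Q : Type} [Finite Q] [Nonempty Q] (h : F.toDSys.Sol Q) :
    ∃ Y : F.ι → (F.β → Q) → Q, F.Model Y := by
  obtain ⟨Z, hP, hD⟩ := h
  obtain ⟨q0⟩ := ‹Nonempty Q›
  -- the derived variables only depend on the base messages
  let jn : (F.β → Q) → (F.ι → Q) → (F.β ⊕ F.ι → Q) := fun m d => Sum.elim m d
  have hY : ∀ j m d d', Z (.inl j) (jn m d) = Z (.inl j) (jn m d') := by
    intro j m d d'
    refine hP (.inl j) _ _ ?_ ?_
    · rintro a ⟨b, rfl⟩; rfl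
    · intro i hi; exact hi.elim
  let Y : F.ι → (F.β → Q) → Q := fun j m => Z (.inl j) (jn m fun _ => q0)
  have hYZ : ∀ j m d, Z (.inl j) (jn m d) = Y j m := fun j m d => hY j m d _
  have hU : ∀ j m d m' d', d j = d' j → Y j m = Y j m' →
      Z (.inr j) (jn m d) = Z (.inr j) (jn m' d') := by
    intro j m d m' d' h1 h2
    refine hP (.inr j) _ _ ?_ ?_
    · intro a ha
      have ha : a = .inr j := ha
      subst ha; exact h1
    · intro i hi
      have hi : i = .inl j := hi
      subst hi
      exact (hYZ _ _ _).trans (h2.trans (hYZ _ _ _).symm)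
  have hpiv : ∀ j i, F.piv j i → ∀ m m', (∀ b, b ≠ i → m b = m' b) → Y j m = Y j m' →
      m i = m' i := by
    intro j i hp m m' hm he
    refine hD (.inl (j, i)) (jn m fun _ => q0) (jn m' fun _ => q0) ?_ ?_
    · rintro a ⟨b, rfl, hb⟩; exact hm b (hb hp)
    · intro k hk
      have hk : k = .inl j := hk
      subst hk
      exact he
  have hd2 : ∀ j m m' d d', Y j m = Y j m' → Z (.inr j) (jn m d) = Z (.inr j) (jn m' d') →
      d j = d' j := by
    intro j m m' d d' h1 h2
    refine hD (.inr (.inl j)) (jn m d) (jn m' d') ?_ ?_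
    · intro a ha; exact ha.elim
    · intro k hk
      have hk : k = .inl j ∨ k = .inr j := hk
      rcases hk with rfl | rfl
      · exact (hYZ _ _ _).trans (h1.trans (hYZ _ _ _).symm)
      · exact h2
  have hd3 : ∀ j i, F.piv j i → ∀ m m' d, (∀ b, b ≠ i → m b = m' b) →
      Z (.inr j) (jn m d) = Z (.inr j) (jn m' d) → m i = m' i := by
    intro j i hp m m' d hm he
    refine hD (.inr (.inr (.inl (j, i)))) (jn m d) (jn m' d) ?_ ?_
    · rintro a (rfl | ⟨b, rfl, hb⟩)
      · rfl
      · exact hm b (hb hp)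
    · intro k hk
      have hk : k = .inr j := hk
      subst hk
      exact he
  refine ⟨Y, hpiv, ?_⟩
  intro k m m' hM hV
  by_contra hne
  set j := F.tgt k with hj
  -- choose `d'` with matching `U` values
  have hsurj : Function.Surjective (fun x : Q => Z (.inr j) (jn m' fun _ => x)) := by
    refine Finite.injective_iff_surjective.1 ?_
    intro x y hxy
    exact hd2 j m' m' (fun _ => x) (fun _ => y) rfl hxy
  obtain ⟨x, hx⟩ := hsurj (Z (.inr j) (jn m fun _ => q0))
  have hxq : q0 = x := by
    refine hD (.inr (.inr (.inr k))) (jn m fun _ => q0) (jn m' fun _ => x) ?_ ?_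
    · rintro a ⟨b, hb, rfl⟩; exact hM b hb
    · rintro i hi
      have hi : i = .inr j ∨ i ∈ Sum.inl '' F.srcV k := hi
      rcases hi with rfl | ⟨i, hi2, rfl⟩
      · exact hx.symm
      · exact (hYZ _ _ _).trans ((hV i hi2).trans (hYZ _ _ _).symm)
  subst hxq
  -- move `m'` to a message differing from `m` only at the pivot
  obtain ⟨i, hi⟩ := F.hpiv j
  have hs2 : Function.Surjective (fun x : Q => Y j (Function.update m i x)) := by
    refine Finite.injective_iff_surjective.1 ?_
    intro x y hxy
    have := hpiv j i hi (Function.update m i x) (Function.update m i y)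
      (fun b hb => by simp [hb]) hxy
    simpa using this
  obtain ⟨y, hy⟩ := hs2 (Y j m')
  have e1 : Z (.inr j) (jn m fun _ => q0) = Z (.inr j) (jn (Function.update m i y) fun _ => q0) := by
    rw [← hx]; exact hU j _ _ _ _ rfl hy.symm
  have e2 := hd3 j i hi m (Function.update m i y) (fun _ => q0)
    (fun b hb => by simp [hb]) e1
  simp only [Function.update_self] at e2
  subst e2
  simp only [Function.update_eq_self] at hy
  exact hne hy

end FSys

/-- A normalized master sum produces a commutative group. -/
theorem group_of_master {Q : Type} (S : (Fin 5 → Q) → Q) (e : Q)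
    (h1 : ∀ i a, S (Function.update (fun _ => e) i a) = a)
    (h2 : ∀ i j, i ≠ j → ∀ n n' k k' : Fin 5 → Q,
      (∀ b, b ≠ i → b ≠ j → n b = n' b) → (∀ b, b ≠ i → b ≠ j → k b = k' b) →
      n i = k i → n j = k j → n' i = k' i → n' j = k' j → S n = S n' → S k = S k')
    (h3 : ∀ i n, Function.Surjective fun a => S (Function.update n i a)) :
    ∃ G : AddCommGroup Q, G.toZero.zero = e ∧ ∀ i j, i ≠ j → ∀ a b,
      S (Function.update (Function.update (fun _ => e) i a) j b) = G.toAdd.add a b := by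
  let P : Fin 5 → Q → Fin 5 → Q → Fin 5 → Q := fun i a j b =>
    Function.update (Function.update (fun _ => e) i a) j b
  have hP : ∀ i a j b c, P i a j b c = if c = j then b else if c = i then a else e := by
    intro i a j b c
    simp [P, Function.update_apply]
  have h1' : ∀ i j a, i ≠ j → S (P i a j e) = a := by
    intro i j a h
    rw [← h1 i a]; congr 1; funext c; simp only [hP, Function.update_apply]
    grind
  -- moving a value to an empty slot
  have move : ∀ n j k, j ≠ k → n k = e →
      S n = S (Function.update (Function.update n j e) k (n j)) := by
    intro n j k hjk hk
    refine h2 j k hjk (Function.update (fun _ => e) j (n j))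
      (Function.update (fun _ => e) k (n j)) _ _ ?_ ?_ ?_ ?_ ?_ ?_ ?_
    · intro b hb hb'; simp [hb, hb']
    · intro b hb hb'; simp [hb, hb']
    · simp
    · simp [hjk.symm, hk]
    · simp [hjk]
    · simp
    · rw [h1, h1]
  have merge : ∀ n i j, i ≠ j →
      S n = S (Function.update (Function.update n j e) i (S (P i (n i) j (n j)))) := by
    intro n i j hij
    refine h2 i j hij (P i (n i) j (n j))
      (Function.update (fun _ => e) i (S (P i (n i) j (n j)))) _ _ ?_ ?_ ?_ ?_ ?_ ?_ ?_
    · intro b hb hb'; simp [hP, hb, hb']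
    · intro b hb hb'; simp [hb, hb']
    · simp [hP, hij]
    · simp [hP]
    · simp
    · simp [hij.symm]
    · rw [h1]
  have swap : ∀ i j a b, i ≠ j → S (P i a j b) = S (P j b i a) := by
    intro i j a b hij
    congr 1; funext c; simp only [hP]; grind
  have mvR : ∀ i j k a b, i ≠ j → k ≠ i → k ≠ j → S (P i a j b) = S (P i a k b) := by
    intro i j k a b hij hki hkj
    rw [move (P i a j b) j k hkj.symm (by simp [hP, hki, hkj])]
    congr 1; funext c; simp only [hP, Function.update_apply]; grind
  have mvL : ∀ i j k a b, i ≠ j → k ≠ i → k ≠ j → S (P i a j b) = S (P k a j b) := by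
    intro i j k a b hij hki hkj
    rw [swap i j a b hij, mvR j i k b a hij.symm hkj hki, swap j k b a hkj.symm]
  have all1 : ∀ i j a b, i ≠ j → i ≠ 1 → S (P i a j b) = S (P 0 a 1 b) := by
    intro i j a b hij hi
    have e1 : S (P i a j b) = S (P i a 1 b) := by
      by_cases hj : j = 1
      · rw [hj]
      · exact mvR i j 1 a b hij hi.symm (Ne.symm hj)
    rw [e1]
    by_cases hi0 : i = 0
    · rw [hi0]
    · exact mvL i 1 0 a b hi (Ne.symm hi0) (by decide)
  have all : ∀ i j a b, i ≠ j → S (P i a j b) = S (P 0 a 1 b) := by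
    intro i j a b hij
    by_cases hi : i = 1
    · obtain ⟨k, hk1, hk2⟩ : ∃ k : Fin 5, k ≠ 1 ∧ k ≠ j := by
        clear * -
        revert j; decide
      rw [mvL i j k a b hij (by rw [hi]; exact hk1) hk2]
      exact all1 k j a b hk2 hk1
    · exact all1 i j a b hij hi
  let op : Q → Q → Q := fun a b => S (P 0 a 1 b)
  have comm : ∀ a b, op a b = op b a := by
    intro a b
    show S (P 0 a 1 b) = S (P 0 b 1 a)
    rw [swap 0 1 a b (by decide)]
    exact all 1 0 b a (by decide)
  have opE : ∀ a, op a e = a := by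
    intro a; exact h1' 0 1 a (by decide)
  have assoc : ∀ a b c, op (op a b) c = op a (op b c) := by
    intro a b c
    let n : Fin 5 → Q := ![a, b, c, e, e]
    have e1 := merge n 0 1 (by decide)
    have e2 := merge n 1 2 (by decide)
    have f1 : Function.update (Function.update n 1 e) 0 (S (P 0 (n 0) 1 (n 1))) =
        P 0 (op a b) 2 c := by
      funext k; simp only [hP, Function.update_apply]
      fin_cases k <;> simp [n, op]
    have f2 : Function.update (Function.update n 2 e) 1 (S (P 1 (n 1) 2 (n 2))) =
        P 0 a 1 (op b c) := by
      have := all 1 2 (n 1) (n 2) (by decide)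
      rw [this]
      funext k; simp only [hP, Function.update_apply]
      fin_cases k <;> simp [n, op]
    rw [f1, all 0 2 _ _ (by decide)] at e1
    rw [f2] at e2
    exact e1.symm.trans e2
  have inv : ∀ a, ∃ b, op b a = e := by
    intro a
    obtain ⟨b, hb⟩ := h3 0 (Function.update (fun _ => e) 1 a) e
    refine ⟨b, ?_⟩
    rw [← hb]
    show S _ = S _
    congr 1; funext c; simp only [hP, Function.update_apply]; grind
  choose ng hng using inv
  let iA : Add Q := ⟨op⟩
  let iZ : Zero Q := ⟨e⟩
  let iN : Neg Q := ⟨ng⟩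
  let iG : AddGroup Q := AddGroup.ofLeftAxioms assoc (fun a => (comm _ _).trans (opE a)) hng
  refine ⟨{ iG with add_comm := comm }, rfl, ?_⟩
  · intro i j hij a b
    exact all i j a b hij

/-! ### Ring systems -/

/-- A system of bracket equations for additive operators. -/
structure RSys where
  ι : Type
  [fι : Fintype ι]
  Rel : ι → ι → ι → Prop
  z : ι
  o : ι

attribute [instance] RSys.fι

/-- The system is satisfied by operators on the elementary abelian 2-group `V`. -/
structure RSys.Sat (R : RSys) (V : Type) [AddCommGroup V] (r : R.ι → V →+ V) : Prop where
  two : ∀ x : V, x + x = 0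
  zero : ∀ x, r R.z x = 0
  one : ∀ x, r R.o x = x
  rel : ∀ i j k, R.Rel i j k → ∀ x, r i (r j x) + r j (r i x) = r k x

namespace RSys
variable (R : RSys)

/-- Derived variables: master sum, pair sums, and eight variables for each operator
(`A, E1, E2, E3, E4, E5, B, H`). -/
abbrev Var : Type := Unit ⊕ (Fin 5 × Fin 5) ⊕ (R.ι × Fin 8)

abbrev W : Type := Fin 5 ⊕ R.Var

def vT : R.Var := .inl ()
def vG (i j : Fin 5) : R.Var := .inr (.inl (i, j))
def vO (r : R.ι) (k : Fin 8) : R.Var := .inr (.inr (r, k))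
def wM (i : Fin 5) : R.W := .inl i
def wG (i j : Fin 5) : R.W := .inr (R.vG i j)
def wO (r : R.ι) (k : Fin 8) : R.W := .inr (R.vO r k)

def pivot : R.Var → Fin 5 → Prop
  | .inl _, _ => True
  | .inr (.inl p), i => i = p.1 ∨ i = p.2
  | .inr (.inr p), i => i = ![2, 1, 2, 3, 4, 2, 4, 2] p.2

/-- The functional dependencies (four sources with repetitions allowed, one target). -/
inductive FD : R.W → R.W → R.W → R.W → R.Var → Prop
  | g (i j : Fin 5) : FD (R.wM i) (R.wM j) (R.wM i) (R.wM j) (R.vG i j)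
  | t (i j k l n : Fin 5) (hij : i ≠ j) (h : ∀ b, b ≠ i → b ≠ j → b = k ∨ b = l ∨ b = n) :
      FD (R.wG i j) (R.wM k) (R.wM l) (R.wM n) R.vT
  | two : FD (R.wG 0 1) (R.wG 1 2) (R.wG 0 1) (R.wG 1 2) (R.vG 0 2)
  | a (r : R.ι) : FD (R.wM 0) (R.wM 2) (R.wM 0) (R.wM 2) (R.vO r 0)
  | e1 (r : R.ι) : FD (R.wM 0) (R.wM 1) (R.wM 0) (R.wM 1) (R.vO r 1)
  | e2 (r : R.ι) : FD (R.wM 1) (R.wM 2) (R.wM 1) (R.wM 2) (R.vO r 2)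
  | e3 (r : R.ι) : FD (R.wM 0) (R.wM 3) (R.wM 0) (R.wM 3) (R.vO r 3)
  | e4 (r : R.ι) : FD (R.wM 3) (R.wM 4) (R.wM 3) (R.wM 4) (R.vO r 4)
  | e5 (r : R.ι) : FD (R.wM 0) (R.wG 2 4) (R.wM 0) (R.wG 2 4) (R.vO r 5)
  | b (r : R.ι) : FD (R.wM 1) (R.wM 4) (R.wM 1) (R.wM 4) (R.vO r 6)
  | h (r : R.ι) : FD (R.wG 0 1) (R.wG 2 4) (R.wG 0 1) (R.wG 2 4) (R.vO r 7)
  | l1 (r : R.ι) : FD (R.wO r 0) (R.wG 1 2) (R.wO r 0) (R.wG 1 2) (R.vO r 1)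
  | l2 (r : R.ι) : FD (R.wO r 0) (R.wG 0 1) (R.wO r 0) (R.wG 0 1) (R.vO r 2)
  | l3 (r : R.ι) : FD (R.wO r 0) (R.wG 2 3) (R.wO r 0) (R.wG 2 3) (R.vO r 3)
  | l4 (r : R.ι) : FD (R.wO r 0) (R.wG 0 3) (R.wG 2 4) (R.wG 2 4) (R.vO r 4)
  | l5 (r : R.ι) : FD (R.wO r 0) (R.wM 4) (R.wO r 0) (R.wM 4) (R.vO r 5)
  | l6 (r : R.ι) : FD (R.wO r 0) (R.wG 0 1) (R.wG 2 4) (R.wG 2 4) (R.vO r 6)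
  | l7 (r : R.ι) : FD (R.wO r 0) (R.wO r 6) (R.wO r 0) (R.wO r 6) (R.vO r 7)
  | z : FD (R.wM 2) (R.wM 4) (R.wM 2) (R.wM 4) (R.vO R.z 5)
  | o : FD (R.wG 0 2) (R.wG 0 2) (R.wG 0 2) (R.wG 0 2) (R.vO R.o 0)
  | rel (i j k : R.ι) (h : R.Rel i j k) :
      FD (R.wO j 1) (R.wO i 2) (R.wO i 3) (R.wO j 4) (R.vO k 5)

/-- The associated functional dependency system. -/
def toFSys : FSys where
  β := Fin 5
  ι := R.Var
  κ := {c : R.W × R.W × R.W × R.W × R.Var // R.FD c.1 c.2.1 c.2.2.1 c.2.2.2.1 c.2.2.2.2}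
  piv := R.pivot
  hpiv := by
    rintro (j | j | j)
    · exact ⟨0, trivial⟩
    · exact ⟨j.1, Or.inl rfl⟩
    · exact ⟨_, rfl⟩
  srcM c := {b | c.1.1 = .inl b ∨ c.1.2.1 = .inl b ∨ c.1.2.2.1 = .inl b ∨ c.1.2.2.2.1 = .inl b}
  srcV c := {b | c.1.1 = .inr b ∨ c.1.2.1 = .inr b ∨ c.1.2.2.1 = .inr b ∨ c.1.2.2.2.1 = .inr b}
  tgt c := c.1.2.2.2.2

/-- The value of a (message or derived) variable. -/
def val {Q : Type} (Y : R.Var → (Fin 5 → Q) → Q) : R.W → (Fin 5 → Q) → Q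
  | .inl b, m => m b
  | .inr v, m => Y v m

/-- Unfolded notion of a model. -/
structure IsModel {Q : Type} (Y : R.Var → (Fin 5 → Q) → Q) : Prop where
  piv : ∀ v i, R.pivot v i → ∀ m m', (∀ b, b ≠ i → m b = m' b) → Y v m = Y v m' → m i = m' i
  fd : ∀ a b c d t, R.FD a b c d t → ∀ m m', R.val Y a m = R.val Y a m' →
    R.val Y b m = R.val Y b m' → R.val Y c m = R.val Y c m' → R.val Y d m = R.val Y d m' →
    Y t m = Y t m'

lemma model_iff {Q : Type} (Y : R.Var → (Fin 5 → Q) → Q) :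
    FSys.Model R.toFSys Y ↔ R.IsModel Y := by
  constructor
  · rintro ⟨h1, h2⟩
    refine ⟨h1, fun a b c d t hfd m m' ha hb hc hd => ?_⟩
    refine h2 ⟨(a, b, c, d, t), hfd⟩ m m' ?_ ?_
    · rintro x (h | h | h | h)
      · have h : a = _ := h
        subst h; exact ha
      · have h : b = _ := h
        subst h; exact hb
      · have h : c = _ := h
        subst h; exact hc
      · have h : d = _ := h
        subst h; exact hd
    · rintro x (h | h | h | h)
      · have h : a = _ := h
        subst h; exact ha
      · have h : b = _ := h
        subst h; exact hb
      · have h : c = _ := h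
        subst h; exact hc
      · have h : d = _ := h
        subst h; exact hd
  · rintro ⟨h1, h2⟩
    refine ⟨h1, ?_⟩
    rintro ⟨⟨a, b, c, d, t⟩, hfd⟩ m m' hM hV
    refine h2 a b c d t hfd m m' ?_ ?_ ?_ ?_
    · rcases a with a | a
      · exact hM a (Or.inl rfl)
      · exact hV a (Or.inl rfl)
    · rcases b with a | a
      · exact hM a (Or.inr (Or.inl rfl))
      · exact hV a (Or.inr (Or.inl rfl))
    · rcases c with a | a
      · exact hM a (Or.inr (Or.inr (Or.inl rfl)))
      · exact hV a (Or.inr (Or.inr (Or.inl rfl)))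
    · rcases d with a | a
      · exact hM a (Or.inr (Or.inr (Or.inr rfl)))
      · exact hV a (Or.inr (Or.inr (Or.inr rfl)))

lemma size_bound : R.toFSys.toDSys.size ≤ (1000 * (Fintype.card R.ι + 1)) ^ 5 := by
  have h := R.toFSys.size_toDSys
  have h1 : Fintype.card R.toFSys.β = 5 := by
    have : Fintype.card R.toFSys.β = Fintype.card (Fin 5) := Fintype.card_congr (Equiv.refl _)
    simpa using this
  have h2 : Fintype.card R.toFSys.ι = 26 + 8 * Fintype.card R.ι := by
    have : Fintype.card R.toFSys.ι = Fintype.card R.Var := Fintype.card_congr (Equiv.refl _)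
    rw [this]; simp [Fintype.card_sum, Fintype.card_prod]; ring
  have h3 : Fintype.card R.toFSys.κ ≤ (31 + 8 * Fintype.card R.ι) ^ 5 := by
    have : Fintype.card R.toFSys.κ ≤ Fintype.card (R.W × R.W × R.W × R.W × R.Var) :=
      Fintype.card_le_of_injective
        (fun c : {c : R.W × R.W × R.W × R.W × R.Var //
          R.FD c.1 c.2.1 c.2.2.1 c.2.2.2.1 c.2.2.2.2} => c.1) Subtype.val_injective
    refine this.trans ?_
    simp only [Fintype.card_prod, Fintype.card_sum, Fintype.card_unit, Fintype.card_fin]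
    generalize Fintype.card R.ι = x
    have e1 : 5 + (1 + (5 * 5 + x * 8)) = 31 + 8 * x := by ring
    have e2 : 1 + (5 * 5 + x * 8) ≤ 31 + 8 * x := by omega
    rw [e1]
    calc (31 + 8 * x) * ((31 + 8 * x) * ((31 + 8 * x) * ((31 + 8 * x) * (1 + (5 * 5 + x * 8)))))
        ≤ (31 + 8 * x) * ((31 + 8 * x) * ((31 + 8 * x) * ((31 + 8 * x) * (31 + 8 * x)))) := by
          gcongr
      _ = (31 + 8 * x) ^ 5 := by ring
  rw [h1, h2] at h
  generalize Fintype.card R.ι = x at *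
  have e3 : (31 + 8 * x) ^ 5 ≤ (50 * (x + 1)) ^ 5 := Nat.pow_le_pow_left (by omega) 5
  have e4 : 10 * (5 + 1) * (26 + 8 * x + 1) ≤ 10000 * (x + 1) ^ 5 := by
    have : x + 1 ≤ (x + 1) ^ 5 := Nat.le_self_pow (by norm_num) _
    nlinarith
  have e5 : (50 * (x + 1)) ^ 5 = 312500000 * (x + 1) ^ 5 := by ring
  have e6 : (1000 * (x + 1)) ^ 5 = 1000000000000000 * (x + 1) ^ 5 := by ring
  rw [e6]
  nlinarith [Nat.zero_le ((x + 1) ^ 5)]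

end RSys

namespace RSys
variable (R : RSys)

/-- Relabelling the messages by injections preserves models. -/
lemma IsModel.relabel {Q : Type} {Y : R.Var → (Fin 5 → Q) → Q} (h : R.IsModel Y)
    (l : Fin 5 → Q → Q) (hl : ∀ i, Function.Injective (l i)) :
    R.IsModel (fun v n => Y v (fun i => l i (n i))) := by
  constructor
  · intro v i hp m m' hm he
    refine hl i (h.piv v i hp _ _ ?_ he)
    intro b hb
    exact congrArg (l b) (hm b hb)
  · intro a b c d t hfd m m' ha hb hc hd
    have key : ∀ w : R.W, R.val (fun v n => Y v (fun i => l i (n i))) w m =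
        R.val (fun v n => Y v (fun i => l i (n i))) w m' →
        R.val Y w (fun i => l i (m i)) = R.val Y w (fun i => l i (m' i)) := by
      rintro (w | w) hw
      · exact congrArg (l w) hw
      · exact hw
    exact h.fd a b c d t hfd _ _ (key a ha) (key b hb) (key c hc) (key d hd)


/-- Surjectivity along pivots. -/
lemma IsModel.surj {Q : Type} [Finite Q] {Y : R.Var → (Fin 5 → Q) → Q} (h : R.IsModel Y)
    (v : R.Var) (i : Fin 5) (hp : R.pivot v i) (n : Fin 5 → Q) :
    Function.Surjective fun a => Y v (Function.update n i a) := by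
  refine Finite.injective_iff_surjective.1 ?_
  intro a b hab
  have := h.piv v i hp (Function.update n i a) (Function.update n i b)
    (fun c hc => by simp [hc]) hab
  simpa using this

/-- The pair sums and the master sum determine each other. -/
lemma IsModel.G_iff {Q : Type} [Finite Q] {Y : R.Var → (Fin 5 → Q) → Q} (h : R.IsModel Y)
    {i j : Fin 5} (hij : i ≠ j) {n n' : Fin 5 → Q}
    (hn : ∀ b, b ≠ i → b ≠ j → n b = n' b) :
    Y R.vT n = Y R.vT n' ↔ Y (R.vG i j) n = Y (R.vG i j) n' := by
  obtain ⟨k, l, p, hk, hl, hp, hklp⟩ : ∃ k l p : Fin 5, (k ≠ i ∧ k ≠ j) ∧ (l ≠ i ∧ l ≠ j) ∧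
      (p ≠ i ∧ p ≠ j) ∧ ∀ b, b ≠ i → b ≠ j → b = k ∨ b = l ∨ b = p := by
    clear * - hij
    revert i j; decide
  have back : ∀ n n' : Fin 5 → Q, (∀ b, b ≠ i → b ≠ j → n b = n' b) →
      Y (R.vG i j) n = Y (R.vG i j) n' → Y R.vT n = Y R.vT n' := by
    intro n n' hn hG
    exact h.fd _ _ _ _ _ (FD.t i j k l p hij hklp) n n' hG (hn k hk.1 hk.2)
      (hn l hl.1 hl.2) (hn p hp.1 hp.2)
  refine ⟨fun hT => ?_, back n n' hn⟩
  obtain ⟨a, ha⟩ := h.surj R (R.vG i j) i (Or.inl rfl) n (Y (R.vG i j) n')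
  have h1 : Y R.vT (Function.update n i a) = Y R.vT n' := by
    refine back _ _ ?_ ha
    intro b hb hb'; simp [hb, hn b hb hb']
  have h2 := h.piv R.vT i trivial (Function.update n i a) n (fun b hb => by simp [hb])
    (h1.trans hT.symm)
  simp only [Function.update_self] at h2
  subst h2
  simpa using ha

/-- Soundness for normalized models. -/
lemma IsModel.sat_of_normal {Q : Type} [Finite Q] {Y : R.Var → (Fin 5 → Q) → Q}
    (h : R.IsModel Y) (e : Q) (hnorm : ∀ i a, Y R.vT (Function.update (fun _ => e) i a) = a) :
    ∃ (_ : AddCommGroup Q) (r : R.ι → Q →+ Q), R.Sat Q r := by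
  have hGdep : ∀ i j (n n' : Fin 5 → Q), n i = n' i → n j = n' j →
      Y (R.vG i j) n = Y (R.vG i j) n' := by
    intro i j n n' h1 h2
    exact h.fd _ _ _ _ _ (FD.g i j) n n' h1 h2 h1 h2
  obtain ⟨G, hG0, hGadd⟩ := group_of_master (fun n => Y R.vT n) e hnorm (by
    intro i j hij n n' k k' hn hk h1 h2 h3 h4 hS
    have e1 := (h.G_iff R hij hn).1 hS
    refine (h.G_iff R hij hk).2 ?_
    rw [← hGdep i j n k h1 h2, ← hGdep i j n' k' h3 h4]; exact e1) (by
    intro i n; exact h.surj R R.vT i trivial n)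
  have hG0' : e = 0 := hG0.symm
  have hadd : ∀ i j, i ≠ j → ∀ a b : Q,
      Y R.vT (Function.update (Function.update (fun _ => e) i a) j b) = a + b := hGadd
  clear hGadd hG0
  have Giff : ∀ i j, i ≠ j → ∀ n n' : Fin 5 → Q, Y (R.vG i j) n = Y (R.vG i j) n' ↔
      n i + n j = n' i + n' j := by
    intro i j hij n n'
    rw [← hadd i j hij, ← hadd i j hij, h.G_iff R hij (by intro b hb hb'; simp [hb, hb'])]
    rw [hGdep i j n (Function.update (Function.update (fun _ => e) i (n i)) j (n j))
      (by simp [hij]) (by simp),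
      hGdep i j n' (Function.update (Function.update (fun _ => e) i (n' i)) j (n' j))
      (by simp [hij]) (by simp)]
  have two : ∀ x : Q, x + x = 0 := by
    intro x
    have := h.fd _ _ _ _ _ FD.two ![x, -x, x, 0, 0] ![0, 0, 0, 0, 0]
      ((Giff 0 1 (by decide) _ _).2 (by simp)) ((Giff 1 2 (by decide) _ _).2 (by simp))
      ((Giff 0 1 (by decide) _ _).2 (by simp)) ((Giff 1 2 (by decide) _ _).2 (by simp))
    have := (Giff 0 2 (by decide) _ _).1 this
    simpa using this
  let O : Fin 5 → Q := ![0, 0, 0, 0, 0]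
  have hrho : ∀ r x, ∃ y, Y (R.vO r 0) ![x, 0, y, 0, 0] = Y (R.vO r 0) O := by
    intro r x
    obtain ⟨y, hy⟩ := h.surj R (R.vO r 0) 2 rfl ![x, 0, 0, 0, 0] (Y (R.vO r 0) O)
    refine ⟨y, ?_⟩
    rw [← hy]
    simp only
    congr 1; funext c; fin_cases c <;> simp
  choose ρ hρ using hrho
  have hA : ∀ r x y u v, Y (R.vO r 0) ![x, y, ρ r x, u, v] = Y (R.vO r 0) O := by
    intro r x y u v
    rw [← hρ r x]
    exact h.fd _ _ _ _ _ (FD.a r) _ _ rfl rfl rfl rfl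
  have hE1 : ∀ r x z u v, Y (R.vO r 1) ![x, ρ r x, z, u, v] = Y (R.vO r 1) O := by
    intro r x z u v
    have e1 : Y (R.vO r 1) ![x, ρ r x, z, u, v] = Y (R.vO r 1) ![x, ρ r x, ρ r x, 0, 0] :=
      h.fd _ _ _ _ _ (FD.e1 r) _ _ rfl rfl rfl rfl
    rw [e1]
    have g := (Giff 1 2 (by decide) ![x, ρ r x, ρ r x, 0, 0] O).2 (by simp [O, two])
    exact h.fd _ _ _ _ _ (FD.l1 r) _ _ (hA r x _ _ _) g (hA r x _ _ _) g
  have hE2 : ∀ r x w u v, Y (R.vO r 2) ![w, x, ρ r x, u, v] = Y (R.vO r 2) O := by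
    intro r x w u v
    have e1 : Y (R.vO r 2) ![w, x, ρ r x, u, v] = Y (R.vO r 2) ![x, x, ρ r x, 0, 0] :=
      h.fd _ _ _ _ _ (FD.e2 r) _ _ rfl rfl rfl rfl
    rw [e1]
    have g := (Giff 0 1 (by decide) ![x, x, ρ r x, 0, 0] O).2 (by simp [O, two])
    exact h.fd _ _ _ _ _ (FD.l2 r) _ _ (hA r x _ _ _) g (hA r x _ _ _) g
  have hE3 : ∀ r x y z v, Y (R.vO r 3) ![x, y, z, ρ r x, v] = Y (R.vO r 3) O := by
    intro r x y z v
    have e1 : Y (R.vO r 3) ![x, y, z, ρ r x, v] = Y (R.vO r 3) ![x, 0, ρ r x, ρ r x, 0] :=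
      h.fd _ _ _ _ _ (FD.e3 r) _ _ rfl rfl rfl rfl
    rw [e1]
    have g := (Giff 2 3 (by decide) ![x, 0, ρ r x, ρ r x, 0] O).2 (by simp [O, two])
    exact h.fd _ _ _ _ _ (FD.l3 r) _ _ (hA r x _ _ _) g (hA r x _ _ _) g
  have hE4 : ∀ r x y z w, Y (R.vO r 4) ![w, y, z, x, ρ r x] = Y (R.vO r 4) O := by
    intro r x y z w
    have e1 : Y (R.vO r 4) ![w, y, z, x, ρ r x] = Y (R.vO r 4) ![x, 0, ρ r x, x, ρ r x] :=
      h.fd _ _ _ _ _ (FD.e4 r) _ _ rfl rfl rfl rfl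
    rw [e1]
    have g := (Giff 0 3 (by decide) ![x, 0, ρ r x, x, ρ r x] O).2 (by simp [O, two])
    have g' := (Giff 2 4 (by decide) ![x, 0, ρ r x, x, ρ r x] O).2 (by simp [O, two])
    exact h.fd _ _ _ _ _ (FD.l4 r) _ _ (hA r x _ _ _) g g' g'
  have hE5 : ∀ r x y z u v, Y (R.vO r 5) ![x, y, z, u, v] = Y (R.vO r 5) O →
      z + v = ρ r x := by
    intro r x y z u v hh
    have e0 : Y (R.vO r 5) ![x, 0, ρ r x, 0, 0] = Y (R.vO r 5) O :=
      h.fd _ _ _ _ _ (FD.l5 r) _ _ (hA r x _ _ _) rfl (hA r x _ _ _) rfl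
    have g := (Giff 2 4 (by decide) ![x, y, z, u, v] ![x, 0, z + v, 0, 0]).2 (by simp)
    have e1 : Y (R.vO r 5) ![x, y, z, u, v] = Y (R.vO r 5) ![x, 0, z + v, 0, 0] :=
      h.fd _ _ _ _ _ (FD.e5 r) _ _ rfl g rfl g
    have := h.piv (R.vO r 5) 2 rfl ![x, 0, z + v, 0, 0] ![x, 0, ρ r x, 0, 0]
      (by intro b hb; fin_cases b <;> simp at hb ⊢) ((e1.symm.trans hh).trans e0.symm)
    simpa using this
  have hB : ∀ r y x z u, Y (R.vO r 6) ![x, y, z, u, ρ r y] = Y (R.vO r 6) O := by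
    intro r y x z u
    have e1 : Y (R.vO r 6) ![x, y, z, u, ρ r y] = Y (R.vO r 6) ![y, y, ρ r y, 0, ρ r y] :=
      h.fd _ _ _ _ _ (FD.b r) _ _ rfl rfl rfl rfl
    rw [e1]
    have g := (Giff 0 1 (by decide) ![y, y, ρ r y, 0, ρ r y] O).2 (by simp [O, two])
    have g' := (Giff 2 4 (by decide) ![y, y, ρ r y, 0, ρ r y] O).2 (by simp [O, two])
    exact h.fd _ _ _ _ _ (FD.l6 r) _ _ (hA r y _ _ _) g g' g'
  have hH : ∀ r x y, Y (R.vO r 7) ![x, y, ρ r x, 0, ρ r y] = Y (R.vO r 7) O := by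
    intro r x y
    exact h.fd _ _ _ _ _ (FD.l7 r) _ _ (hA r x _ _ _) (hB r y _ _ _) (hA r x _ _ _)
      (hB r y _ _ _)
  have ρ0 : ∀ r, ρ r 0 = 0 := by
    intro r
    have := h.piv (R.vO r 0) 2 rfl ![0, 0, ρ r 0, 0, 0] O
      (by intro b hb; fin_cases b <;> simp [O] at hb ⊢) (hρ r 0)
    simpa [O] using this
  have ρadd : ∀ r x y, ρ r (x + y) = ρ r x + ρ r y := by
    intro r x y
    have g := (Giff 0 1 (by decide) ![x, y, ρ r x, 0, ρ r y]
      ![x + y, 0, ρ r x + ρ r y, 0, ρ r 0]).2 (by simp)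
    have g' := (Giff 2 4 (by decide) ![x, y, ρ r x, 0, ρ r y]
      ![x + y, 0, ρ r x + ρ r y, 0, ρ r 0]).2 (by simp [ρ0])
    have e1 : Y (R.vO r 7) ![x, y, ρ r x, 0, ρ r y] = Y (R.vO r 7) _ :=
      h.fd _ _ _ _ _ (FD.h r) _ _ g g' g g'
    have := h.piv (R.vO r 7) 2 rfl ![x + y, 0, ρ r (x + y), 0, ρ r 0]
      ![x + y, 0, ρ r x + ρ r y, 0, ρ r 0]
      (by intro b hb; fin_cases b <;> simp at hb ⊢)
      (((hH r (x + y) 0).trans (hH r x y).symm).trans e1)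
    simpa using this
  refine ⟨G, fun r => ⟨⟨ρ r, ρ0 r⟩, ρadd r⟩, two, ?_, ?_, ?_⟩
  · intro x
    have e1 : Y (R.vO R.z 5) ![x, 0, 0, 0, 0] = Y (R.vO R.z 5) O :=
      h.fd _ _ _ _ _ FD.z _ _ rfl rfl rfl rfl
    have := hE5 _ _ _ _ _ _ e1
    simpa using this.symm
  · intro x
    have g := (Giff 0 2 (by decide) ![x, 0, x, 0, 0] O).2 (by simp [O, two])
    have e1 : Y (R.vO R.o 0) ![x, 0, x, 0, 0] = Y (R.vO R.o 0) O :=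
      h.fd _ _ _ _ _ FD.o _ _ g g g g
    have := h.piv (R.vO R.o 0) 2 rfl ![x, 0, ρ R.o x, 0, 0] ![x, 0, x, 0, 0]
      (by intro b hb; fin_cases b <;> simp at hb ⊢) ((hρ _ _).trans e1.symm)
    simpa using this
  · intro i j k hr x
    have := h.fd _ _ _ _ _ (FD.rel i j k hr)
      ![x, ρ j x, ρ i (ρ j x), ρ i x, ρ j (ρ i x)] O (hE1 _ _ _ _ _) (hE2 _ _ _ _ _)
      (hE3 _ _ _ _ _) (hE4 _ _ _ _ _)
    exact hE5 _ _ _ _ _ _ this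

/-- Soundness. -/
theorem IsModel.sat {Q : Type} [Finite Q] [Nonempty Q] {Y : R.Var → (Fin 5 → Q) → Q}
    (h : R.IsModel Y) : ∃ (_ : AddCommGroup Q) (r : R.ι → Q →+ Q), R.Sat Q r := by
  obtain ⟨q0⟩ := ‹Nonempty Q›
  have hs : ∀ i : Fin 5, Function.Bijective
      fun a => Y R.vT (Function.update (fun _ => q0) i a) := by
    intro i
    have := h.surj R R.vT i trivial (fun _ => q0)
    exact ⟨Finite.injective_iff_surjective.2 this, this⟩
  let l : Fin 5 → Q → Q := fun i => (Equiv.ofBijective _ (hs i)).symm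
  have hl : ∀ i a, Y R.vT (Function.update (fun _ => q0) i (l i a)) = a := fun i a =>
    (Equiv.ofBijective _ (hs i)).apply_symm_apply a
  have hl0 : ∀ i, l i (Y R.vT (fun _ => q0)) = q0 := by
    intro i
    refine (hs i).1 ?_
    simp only
    rw [hl]; simp
  refine (h.relabel R l (fun i => (Equiv.ofBijective _ (hs i)).symm.injective)).sat_of_normal R
    (Y R.vT (fun _ => q0)) ?_
  intro i a
  show Y R.vT _ = a
  conv_rhs => rw [← hl i a]
  congr 1
  funext c
  by_cases hc : c = i
  · subst hc; simp
  · simp [hc, hl0]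

/-- Completeness: the canonical linear model. -/
def lin {V : Type} [AddCommGroup V] (r : R.ι → V →+ V) : R.Var → (Fin 5 → V) → V
  | .inl _, m => m 0 + m 1 + m 2 + m 3 + m 4
  | .inr (.inl p), m => if p.1 = p.2 then m p.1 else m p.1 + m p.2
  | .inr (.inr p), m =>
    ![m 2 + r p.1 (m 0), m 1 + r p.1 (m 0), m 2 + r p.1 (m 1), m 3 + r p.1 (m 0),
      m 4 + r p.1 (m 3), m 2 + m 4 + r p.1 (m 0), m 4 + r p.1 (m 1),
      m 2 + m 4 + r p.1 (m 0 + m 1)] p.2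

theorem Sat.isModel {V : Type} [AddCommGroup V] {r : R.ι → V →+ V} (h : R.Sat V r) :
    R.IsModel (R.lin r) := by
  have two := h.two
  constructor
  · rintro (v | ⟨i, j⟩ | ⟨r', k⟩) b hp m m' hm he
    · have hs : ∑ c, (m c - m' c) = 0 := by
        have he : m 0 + m 1 + m 2 + m 3 + m 4 = m' 0 + m' 1 + m' 2 + m' 3 + m' 4 := he
        rw [Finset.sum_sub_distrib, Fin.sum_univ_five, Fin.sum_univ_five, he, sub_self]
      rw [Finset.sum_eq_single b (fun c _ hc => by rw [hm c hc, sub_self]) (by simp)] at hs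
      exact sub_eq_zero.1 hs
    · replace he : (if i = j then m i else m i + m j) = if i = j then m' i else m' i + m' j := he
      have hp : b = i ∨ b = j := hp
      split_ifs at he with hij
      · subst hij; rcases hp with rfl | rfl <;> exact he
      · rcases hp with rfl | rfl
        · rw [hm j (Ne.symm hij)] at he; exact add_right_cancel he
        · rw [hm i hij] at he; exact add_left_cancel he
    · have hp : b = ![2, 1, 2, 3, 4, 2, 4, 2] k := hp
      fin_cases k <;> simp at hp <;> subst hp <;> simp [lin] at he
      · rw [hm 0 (by decide)] at he; exact add_right_cancel he
      · rw [hm 0 (by decide)] at he; exact add_right_cancel he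
      · rw [hm 1 (by decide)] at he; exact add_right_cancel he
      · rw [hm 0 (by decide)] at he; exact add_right_cancel he
      · rw [hm 3 (by decide)] at he; exact add_right_cancel he
      · rw [hm 0 (by decide), hm 4 (by decide)] at he
        exact add_right_cancel (add_right_cancel he)
      · rw [hm 1 (by decide)] at he; exact add_right_cancel he
      · rw [hm 0 (by decide), hm 1 (by decide), hm 4 (by decide)] at he
        exact add_right_cancel (add_right_cancel he)
  · intro a b c d t hfd m m' ha hb hc hd
    have two' := h.two
    cases hfd with
    | t i j k l n hij hb' =>
      have hG : m i + m j = m' i + m' j := by simpa [val, wG, vG, lin, hij] using ha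
      have hs : ∑ c, (m c - m' c) = 0 := by
        rw [Finset.sum_eq_add i j hij]
        · calc m i - m' i + (m j - m' j) = (m i + m j) - (m' i + m' j) := by abel
            _ = 0 := by rw [hG, sub_self]
        · rintro c - ⟨h1, h2⟩
          rcases hb' c h1 h2 with rfl | rfl | rfl
          · exact sub_eq_zero.2 hb
          · exact sub_eq_zero.2 hc
          · exact sub_eq_zero.2 hd
        · simp
        · simp
      rw [Finset.sum_sub_distrib, Fin.sum_univ_five, Fin.sum_univ_five] at hs
      exact sub_eq_zero.1 hs
    | g i j =>
      have ha : m i = m' i := ha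
      have hb : m j = m' j := hb
      show (if i = j then m i else m i + m j) = if i = j then m' i else m' i + m' j
      rw [ha, hb]
    | z =>
      have ha : m 2 = m' 2 := ha
      have hb : m 4 = m' 4 := hb
      simp [lin, vO, h.zero, ha, hb]
    | o =>
      simp [val, wG, vG, lin, vO, h.one] at ha ⊢
      rw [add_comm, ha, add_comm]
    | rel i j k hr =>
      simp [val, wO, lin, vO] at ha hb hc hd ⊢
      rw [← h.rel i j k hr, ← h.rel i j k hr]
      have e1 := congrArg (r i) ha
      have e2 := congrArg (r j) hc
      simp only [map_add] at e1 e2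
      have t1 := two (r i (m 1))
      have t2 := two (r i (m' 1))
      have t3 := two (r j (m 3))
      have t4 := two (r j (m' 3))
      grind
    | l4 r' => 
      simp [val, wO, wG, vG, lin, vO] at ha hb hc hd ⊢
      have e2 := congrArg (r r') hb
      simp only [map_add] at e2
      have t1 := two (r r' (m 0))
      have t2 := two (r r' (m' 0))
      have t3 := two (m 2)
      have t4 := two (m' 2)
      grind
    | l6 r' => 
      simp [val, wO, wG, vG, lin, vO] at ha hb hc hd ⊢
      have e2 := congrArg (r r') hb
      simp only [map_add] at e2
      have t1 := two (r r' (m 0))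
      have t2 := two (r r' (m' 0))
      have t3 := two (m 2)
      have t4 := two (m' 2)
      grind
    | l2 r' => 
      simp [val, wO, wG, vG, lin, vO] at ha hb hc hd ⊢
      have e2 := congrArg (r r') hb
      simp only [map_add] at e2
      have t1 := two (r r' (m 0))
      have t2 := two (r r' (m' 0))
      grind
    | h r' =>
      simp only [val, wG, vG] at ha hb
      simp [lin, vO, -map_add] at ha hb ⊢
      rw [ha, hb]
    | _ =>
      simp [val, wM, wG, wO, vG, vO, lin] at ha hb hc hd ⊢
      have t0 := two (m 0)
      have t0' := two (m' 0)
      have t1 := two (m 1)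
      have t1' := two (m' 1)
      have t2 := two (m 2)
      have t2' := two (m' 2)
      grind

end RSys

lemma DSys.Sol.transport (S : DSys) {Q Q' : Type} (e : Q ≃ Q') (h : S.Sol Q) : S.Sol Q' := by
  obtain ⟨Y, h1, h2⟩ := h
  refine ⟨fun j m => e (Y j (fun a => e.symm (m a))), ?_, ?_⟩
  · intro j m m' ha hi
    refine congrArg e (h1 j _ _ (fun a h => congrArg e.symm (ha a h)) (fun i h => ?_))
    exact e.injective (hi i h)
  · intro k m m' ha hi
    refine e.symm.injective (h2 k (fun a => e.symm (m a)) (fun a => e.symm (m' a))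
      (fun a h => congrArg e.symm (ha a h)) (fun i h => ?_))
    exact e.injective (hi i h)

/-- Ring systems can be encoded by networks. -/
theorem RSys.exists_network (R : RSys) : ∃ net : Network, NetworkValid net ∧
    NetworkSizeLE net ((1000 * (Fintype.card R.ι + 1)) ^ 10) ∧
    (∀ q, 1 ≤ q → SolvableWith net q →
      ∃ (_ : AddCommGroup (Fin q)) (r : R.ι → Fin q →+ Fin q), R.Sat (Fin q) r) ∧
    (∀ (V : Type) [AddCommGroup V] [Fintype V] (r : R.ι → V →+ V), R.Sat V r →
      SolvableWith net (Fintype.card V)) := by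
  obtain ⟨net, hv, hs, hsol⟩ := R.toFSys.toDSys.exists_network
  refine ⟨net, hv, ?_, ?_, ?_⟩
  · have hle : R.toFSys.toDSys.size ^ 2 ≤ (1000 * (Fintype.card R.ι + 1)) ^ 10 :=
      calc R.toFSys.toDSys.size ^ 2 ≤ ((1000 * (Fintype.card R.ι + 1)) ^ 5) ^ 2 :=
            Nat.pow_le_pow_left R.size_bound 2
        _ = _ := by rw [← pow_mul]
    obtain ⟨n, s, edges, acc, dem⟩ := net
    exact ⟨hs.1.trans hle, hs.2.1.trans hle, hs.2.2.trans hle⟩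
  · intro q hq h
    have : Nonempty (Fin q) := ⟨⟨0, hq⟩⟩
    obtain ⟨Y, hY⟩ := R.toFSys.model_of_toDSys_sol ((hsol q hq).1 h)
    exact ((R.model_iff Y).1 hY).sat R
  · intro V _ _ r hr
    refine (hsol _ Fintype.card_pos).2 ?_
    exact (R.toFSys.toDSys_sol_of_model (Q := V) (R.lin r)
      ((R.model_iff _).2 (hr.isModel R))).transport _ (Fintype.equivFin V)

/-- Apply a decorated state to a family of stacks: put the letter on top of its stack, or
test that the stack is empty. -/
def mapp {P K Γ : Type} (u : P × Option (K × Option Γ)) (β : K → List Γ) :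
    Option (P × (K → List Γ)) :=
  match u with
  | (p, none) => some (p, β)
  | (p, some (k, some a)) => some (p, Function.update β k (a :: β k))
  | (p, some (k, none)) => if β k = [] then some (p, β) else none

/-- A multi-stack machine described by finitely many word rewriting rules. -/
structure MM where
  P : Type
  K : Type
  Γ : Type
  [fP : Fintype P]
  [fK : Fintype K]
  [fΓ : Fintype Γ]
  step : P × (K → List Γ) → Option (P × (K → List Γ))
  Rule : P × Option (K × Option Γ) → P × Option (K × Option Γ) → Prop
  bot : ∀ u u', Rule u u' → ∀ k, u.2 = some (k, none) ↔ u'.2 = some (k, none)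
  sound : ∀ u u', Rule u u' → ∀ β, (mapp u β).bind step = mapp u' β
  complete : ∀ c c', step c = some c' → ∃ u u' β, Rule u u' ∧ mapp u β = some c ∧
    mapp u' β = some c'

attribute [instance] MM.fP MM.fK MM.fΓ

namespace MM
variable (M : MM)

abbrev U : Type := M.P × Option (M.K × Option M.Γ)
abbrev L : Type := M.K × Option M.Γ
abbrev Cfg : Type := M.P × (M.K → List M.Γ)

/-- Indices of the operators. -/
abbrev Ix (ls : List M.L) : Type := Fin 4 ⊕ M.L ⊕ M.U ⊕ Fin (ls.length + 1)

variable {M}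
def iz {ls : List M.L} : M.Ix ls := .inl 0
def io {ls : List M.L} : M.Ix ls := .inl 1
def it {ls : List M.L} : M.Ix ls := .inl 2
def ic {ls : List M.L} : M.Ix ls := .inl 3
def isl {ls : List M.L} (l : M.L) : M.Ix ls := .inr (.inl l)
def iX {ls : List M.L} (u : M.U) : M.Ix ls := .inr (.inr (.inl u))
def iw {ls : List M.L} (p0 : M.P) (i : ℕ) : M.Ix ls :=
  match i with
  | 0 => iX (p0, none)
  | j + 1 => .inr (.inr (.inr (Fin.ofNat _ j)))

inductive MRel (p0 : M.P) (ls : List M.L) : M.Ix ls → M.Ix ls → M.Ix ls → Prop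
  | sx (p : M.P) (l : M.L) : MRel p0 ls (isl l) (iX (p, none)) (iX (p, some l))
  | ss (l l' : M.L) : l.1 ≠ l'.1 → MRel p0 ls (isl l) (isl l') iz
  | ts (l : M.L) : MRel p0 ls it (isl l) iz
  | rule (u u' : M.U) : M.Rule u u' → MRel p0 ls it (iX u') (iX u)
  | wi (i : ℕ) (h : i < ls.length) : MRel p0 ls (isl ls[i]) (iw p0 i) (iw p0 (i + 1))
  | wt : MRel p0 ls it (iw p0 ls.length) iz
  | wc : MRel p0 ls ic (iw p0 ls.length) io

variable (M) in
def toRSys (p0 : M.P) (ls : List M.L) : RSys where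
  ι := M.Ix ls
  Rel := MRel p0 ls
  z := iz
  o := io

lemma card_toRSys (p0 : M.P) (ls : List M.L) : Fintype.card (M.toRSys p0 ls).ι =
    4 + (Fintype.card M.L + (Fintype.card M.U + (ls.length + 1))) := by
  have : Fintype.card (M.toRSys p0 ls).ι = Fintype.card (M.Ix ls) := rfl
  rw [this, Fintype.card_sum, Fintype.card_sum, Fintype.card_sum, Fintype.card_fin,
    Fintype.card_fin]

/-- `n` steps of the machine. -/
def steps : ℕ → M.Cfg → Option M.Cfg
  | 0, c => some c
  | n + 1, c => (M.step c).bind (steps n)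

/-- The word describing one stack, top first, followed by the bottom marker. -/
def stackWord (k : M.K) (l : List M.Γ) : List M.L := l.map (fun a => (k, some a)) ++ [(k, none)]

/-- The word describing all the stacks. -/
def cfgWord (β : M.K → List M.Γ) (ks : List M.K) : List M.L :=
  ks.flatMap (fun k => stackWord k (β k))

/-! Operator products -/

section ops
variable {A : Type} [Monoid A] (s : M.L → A)

def wordOp (w : List M.L) : A := w.foldl (fun x l => s l * x) 1

lemma wordOp_append (w w' : List M.L) : wordOp s (w ++ w') = wordOp s w' * wordOp s w := by
  have : ∀ (w' : List M.L) (x : A), w'.foldl (fun x l => s l * x) x = wordOp s w' * x := by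
    intro w'
    induction w' with
    | nil => intro x; simp [wordOp]
    | cons l w' ih =>
      intro x
      rw [List.foldl_cons, ih]
      unfold wordOp
      rw [List.foldl_cons, ih (s l * 1)]
      simp [mul_assoc]
      rfl
  unfold wordOp
  rw [List.foldl_append, this w']
  rfl

lemma wordOp_cons (l : M.L) (w : List M.L) : wordOp s (l :: w) = wordOp s w * s l := by
  have := wordOp_append s [l] w
  simpa [wordOp] using this

lemma wordOp_commute (x : A) (w : List M.L) (h : ∀ l ∈ w, Commute x (s l)) :
    Commute x (wordOp s w) := by
  induction w with
  | nil => exact Commute.one_right x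
  | cons l w ih =>
    rw [wordOp_cons]
    exact (ih fun l hl => h l (by simp [hl])).mul_right (h l (by simp))

lemma mem_stackWord {k : M.K} {w : List M.Γ} {l : M.L} (h : l ∈ stackWord k w) : l.1 = k := by
  simp [stackWord] at h
  rcases h with ⟨a, _, rfl⟩ | rfl <;> rfl

lemma cfgWord_split (hs : ∀ l l' : M.L, l.1 ≠ l'.1 → Commute (s l) (s l')) (τ : A)
    (ht : ∀ l, Commute τ (s l)) (β : M.K → List M.Γ) (k : M.K) (ks : List M.K)
    (hk : k ∈ ks) (hnd : ks.Nodup) :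
    ∃ r : A, Commute τ r ∧ ∀ l, wordOp s (cfgWord (Function.update β k l) ks) =
      r * wordOp s (stackWord k l) := by
  induction ks with
  | nil => simp at hk
  | cons j ks ih =>
    have hcons : ∀ β : M.K → List M.Γ, wordOp s (cfgWord β (j :: ks)) =
        wordOp s (cfgWord β ks) * wordOp s (stackWord j (β j)) := by
      intro β
      rw [← wordOp_append]; rfl
    by_cases hjk : k = j
    · subst hjk
      refine ⟨wordOp s (cfgWord β ks), wordOp_commute s τ _ (fun l _ => ht l), ?_⟩
      intro l
      rw [hcons, Function.update_self]
      congr 2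
      unfold cfgWord
      refine List.flatMap_congr ?_
      intro i hi
      rw [Function.update_of_ne]
      rintro rfl
      exact (List.nodup_cons.1 hnd).1 hi
    · have hk' : k ∈ ks := by simpa [hjk] using hk
      obtain ⟨r, hr, h⟩ := ih hk' (List.nodup_cons.1 hnd).2
      refine ⟨r * wordOp s (stackWord j (β j)), hr.mul_right (wordOp_commute s τ _ (fun l _ => ht l)), ?_⟩
      intro l
      rw [hcons, h, Function.update_of_ne (Ne.symm hjk)]
      rw [mul_assoc, mul_assoc]
      congr 1
      refine (wordOp_commute s _ _ ?_).eq
      intro l' hl'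
      refine (wordOp_commute s _ _ ?_).symm
      intro l'' hl''
      apply hs
      rw [mem_stackWord hl', mem_stackWord hl'']
      exact Ne.symm hjk

end ops

/-! The lower bound -/

/-- `x ↦ (y ↦ x y + y x)`. -/
def adE {R : Type} [Ring R] (x : R) : AddMonoid.End R := AddMonoidHom.mulLeft x + AddMonoidHom.mulRight x

lemma adE_apply {R : Type} [Ring R] (x y : R) : adE x y = x * y + y * x := rfl

lemma adE_commute {R : Type} [Ring R] (h2 : ∀ x : R, x + x = 0) (x x' : R)
    (h : x * x' + x' * x = 0) : Commute (adE x) (adE x') := by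
  have h' : x * x' = x' * x := by
    have := h2 (x' * x)
    exact add_right_cancel (h.trans this.symm)
  ext y
  change adE x (adE x' y) = adE x' (adE x y)
  simp only [adE_apply, mul_add, add_mul]
  have e1 : x * (x' * y) = x' * (x * y) := by rw [← mul_assoc, h', mul_assoc]
  have e2 : y * x' * x = y * x * x' := by rw [mul_assoc, ← h', mul_assoc]
  rw [e1, e2]
  simp only [mul_assoc]
  abel

section lower
variable {p0 : M.P} {ls : List M.L} {V : Type} [AddCommGroup V]
  {r : M.Ix ls → V →+ V}

theorem lower (hcard : Nontrivial V) [Finite V] {β0 : M.K → List M.Γ}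
    (hls : ls = cfgWord β0 Finset.univ.toList)
    (hS : (M.toRSys p0 ls).Sat V r) {T : ℕ} {c : M.Cfg}
    (hT : steps T (p0, β0) = some c) : T + 1 ≤ Nat.card (V →+ V) := by
  let R := AddMonoid.End V
  let r' : M.Ix ls → R := r
  have h2 : ∀ x : R, x + x = 0 := by
    intro x; ext v; exact hS.two (x v)
  have hz : r' iz = 0 := by ext v; exact hS.zero v
  have ho : r' io = 1 := by ext v; exact hS.one v
  have hrel : ∀ i j k, MRel p0 ls i j k → adE (r' i) (r' j) = r' k := by
    intro i j k h
    ext v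
    exact hS.rel i j k h v
  let s : M.L → AddMonoid.End R := fun l => adE (r' (isl l))
  let τ : AddMonoid.End R := adE (r' it)
  have hs : ∀ l l' : M.L, l.1 ≠ l'.1 → Commute (s l) (s l') := by
    intro l l' h
    apply adE_commute h2
    exact (hrel _ _ _ (.ss l l' h)).trans hz
  have ht : ∀ l, Commute τ (s l) := by
    intro l
    apply adE_commute h2
    exact (hrel _ _ _ (.ts l)).trans hz
  let vec : M.Cfg → R := fun c => wordOp s (cfgWord c.2 Finset.univ.toList) (r' (iX (c.1, none)))
  have hsx : ∀ p l, s l (r' (iX (p, none))) = r' (iX (p, some l)) := fun p l =>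
    hrel _ _ _ (.sx p l)
  have hvec : ∀ c c', M.step c = some c' → vec c = τ (vec c') := by
    intro c c' h
    obtain ⟨u, u', β, hr, h1, h1'⟩ := M.complete c c' h
    have hru : τ (r' (iX u')) = r' (iX u) := hrel _ _ _ (.rule u u' hr)
    suffices hh : ∃ g : AddMonoid.End R, Commute τ g ∧ vec c = g (r' (iX u)) ∧ vec c' = g (r' (iX u')) by
      obtain ⟨g, hg, e1, e2⟩ := hh
      rw [e1, e2, ← hru]
      exact (DFunLike.congr_fun hg.eq (r' (iX u'))).symm
    by_cases hb : ∃ k, u.2 = some (k, none)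
    · obtain ⟨k, hb⟩ := hb
      have hb' := (M.bot u u' hr k).1 hb
      obtain ⟨r, hr, hsp⟩ := cfgWord_split s hs τ ht β k Finset.univ.toList (by simp)
        (Finset.nodup_toList _)
      refine ⟨r, hr, ?_⟩
      have key : ∀ (u : M.U) c, u.2 = some (k, none) → mapp u β = some c → vec c = r (r' (iX u)) := by
        rintro ⟨p, o⟩ c ho hm
        have ho : o = _ := ho
        subst ho
        simp only [mapp] at hm
        split_ifs at hm with hβ
        · cases hm
          have := hsp []
          rw [← hβ, Function.update_eq_self, hβ] at this
          change (wordOp s _) _ = _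
          rw [this]
          rw [← hsx]
          simp [stackWord, wordOp]
      exact ⟨key u c hb h1, key u' c' hb' h1'⟩
    · have hb' : ¬ ∃ k, u'.2 = some (k, none) := by
        rintro ⟨k, hk⟩
        exact hb ⟨k, (M.bot u u' hr k).2 hk⟩
      refine ⟨wordOp s (cfgWord β Finset.univ.toList), wordOp_commute s τ _ (fun l _ => ht l), ?_⟩
      have key : ∀ (u : M.U) c, (¬ ∃ k, u.2 = some (k, none)) → mapp u β = some c →
          vec c = wordOp s (cfgWord β Finset.univ.toList) (r' (iX u)) := by
        rintro ⟨p, _ | ⟨k, _ | a⟩⟩ c ho hm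
        · simp only [mapp, Option.some.injEq] at hm
          subst hm
          rfl
        · exact absurd ⟨k, rfl⟩ ho
        · simp only [mapp, Option.some.injEq] at hm
          subst hm
          obtain ⟨r, hr, hsp⟩ := cfgWord_split s hs τ ht β k Finset.univ.toList (by simp)
            (Finset.nodup_toList _)
          have e1 := hsp (a :: β k)
          have e2 := hsp (β k)
          rw [Function.update_eq_self] at e2
          change (wordOp s _) _ = _
          rw [e1, e2, ← hsx]
          have : stackWord k (a :: β k) = (k, some a) :: stackWord k (β k) := rfl
          rw [this, wordOp_cons, ← mul_assoc]
          rfl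
      exact ⟨key u c hb h1, key u' c' hb' h1'⟩
  have hstart : vec (p0, β0) = r' (iw p0 ls.length) := by
    change wordOp s (cfgWord β0 Finset.univ.toList) (r' (iX (p0, none))) = _
    rw [← hls]
    have : ∀ i, i ≤ ls.length → wordOp s (ls.take i) (r' (iX (p0, none))) = r' (iw p0 i) := by
      intro i
      induction i with
      | zero => intro _; simp [wordOp]; rfl
      | succ i ih =>
        intro hi
        rw [List.take_succ_eq_append_getElem (by omega), wordOp_append]
        have := hrel _ _ _ (.wi i (by omega) : MRel p0 ls _ _ _)
        rw [← this, ← ih (by omega)]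
        simp [wordOp, s]
    simpa using this ls.length le_rfl
  have hτ : τ (vec (p0, β0)) = 0 := by
    rw [hstart]; exact (hrel _ _ _ .wt).trans hz
  have hne : vec (p0, β0) ≠ 0 := by
    intro h0
    have := hrel _ _ _ (.wc : MRel p0 ls _ _ _)
    rw [← hstart, h0, map_zero, ho] at this
    obtain ⟨v, hv⟩ := exists_ne (0 : V)
    exact hv (DFunLike.congr_fun this v).symm
  have hpow : ∀ n c c', steps n c = some c' → vec c = (τ ^ n) (vec c') := by
    intro n
    induction n with
    | zero => intro c c' h; simp [steps] at h; subst h; simp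
    | succ n ih =>
      intro c c' h
      simp only [steps, Option.bind_eq_some_iff] at h
      obtain ⟨d, h1, h2⟩ := h
      rw [hvec _ _ h1, ih _ _ h2, pow_succ']
      rfl
  have hend := hpow T _ _ hT
  set x := vec c
  have hx : (τ ^ T) x ≠ 0 := by rw [← hend]; exact hne
  have hx' : (τ ^ (T + 1)) x = 0 := by rw [pow_succ']; change τ ((τ ^ T) x) = 0; rw [← hend]; exact hτ
  have hinj : Function.Injective (fun i : Fin (T + 1) => (τ ^ (i : ℕ)) x) := by
    have hlt : ∀ i j : ℕ, i < j → j ≤ T → (τ ^ i) x ≠ (τ ^ j) x := by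
      intro i j hij hj he
      have e : (τ ^ (T - i)) ((τ ^ i) x) = (τ ^ (T - i)) ((τ ^ j) x) := by rw [he]
      have a1 : (τ ^ (T - i)) ((τ ^ i) x) = (τ ^ T) x := by
        change (τ ^ (T - i) * τ ^ i) x = _
        rw [← pow_add]; congr 2; omega
      have a2 : (τ ^ (T - i)) ((τ ^ j) x) = (τ ^ (j - i - 1)) ((τ ^ (T + 1)) x) := by
        change (τ ^ (T - i) * τ ^ j) x = (τ ^ (j - i - 1) * τ ^ (T + 1)) x
        rw [← pow_add, ← pow_add]; congr 2; omega
      rw [a1, a2, hx', map_zero] at e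
      exact hx e
    intro i j he
    by_contra hij
    rcases lt_or_gt_of_ne (fun h => hij (Fin.ext h) : (i : ℕ) ≠ j) with h | h
    · exact hlt i j h (by omega) he
    · exact hlt j i h (by omega) he.symm
  have : Finite (V →+ V) := Finite.of_injective (fun f : V →+ V => (f : V → V)) DFunLike.coe_injective
  have := Nat.card_le_card_of_injective (β := V →+ V) _ hinj
  simpa using this

end lower
end MM

namespace Fock
variable {Y : Type} [Fintype Y]

/-- Creation operator. -/
def cr (y : Y) : Module.End (ZMod 2) (Finset Y → ZMod 2) where
  toFun f s := if y ∈ s then f (s.erase y) else 0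
  map_add' f g := by ext s; by_cases h : y ∈ s <;> simp [h]
  map_smul' c f := by ext s; by_cases h : y ∈ s <;> simp [h]

/-- Annihilation operator. -/
def an (y : Y) : Module.End (ZMod 2) (Finset Y → ZMod 2) where
  toFun f s := if y ∈ s then 0 else f (insert y s)
  map_add' f g := by ext s; by_cases h : y ∈ s <;> simp [h]
  map_smul' c f := by ext s; by_cases h : y ∈ s <;> simp [h]

lemma cr_apply (y : Y) (f : Finset Y → ZMod 2) (s) : cr y f s = if y ∈ s then f (s.erase y) else 0 := rfl
lemma an_apply (y : Y) (f : Finset Y → ZMod 2) (s) : an y f s = if y ∈ s then 0 else f (insert y s) := rfl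

lemma cr_cr (y z : Y) : cr y * cr z = cr z * cr y := by
  refine LinearMap.ext fun f => funext fun s => ?_
  simp only [Module.End.mul_apply, cr_apply, Finset.mem_erase, Finset.erase_right_comm (a := y) (b := z)]
  by_cases h : y = z
  · subst h; rfl
  · have h' := Ne.symm h
    by_cases h1 : y ∈ s <;> by_cases h2 : z ∈ s <;> simp [h1, h2, h, h']

lemma an_an (y z : Y) : an y * an z = an z * an y := by
  refine LinearMap.ext fun f => funext fun s => ?_
  simp only [Module.End.mul_apply, an_apply, Finset.mem_insert, Finset.insert_comm y z]
  by_cases h : y = z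
  · subst h; rfl
  · have h' := Ne.symm h
    by_cases h1 : y ∈ s <;> by_cases h2 : z ∈ s <;> simp [h1, h2, h, h']

lemma an_cr (y z : Y) : an y * cr z = cr z * an y + if y = z then 1 else 0 := by
  refine LinearMap.ext fun f => funext fun s => ?_
  by_cases h : y = z
  · subst h
    simp only [if_true, Module.End.mul_apply, LinearMap.add_apply, Pi.add_apply, an_apply, cr_apply,
      Module.End.one_apply]
    by_cases h1 : y ∈ s
    · simp [h1, CharTwo.add_self_eq_zero]
    · simp [h1]
  · have h' := Ne.symm h
    simp only [h, if_false, Module.End.mul_apply, LinearMap.add_apply, Pi.add_apply, an_apply, cr_apply,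
      LinearMap.zero_apply, Pi.zero_apply, add_zero]
    by_cases h1 : y ∈ s <;> by_cases h2 : z ∈ s <;> simp [h1, h2, h, h']
    rw [Finset.erase_insert_of_ne h]

/-- Annihilation, extended by zero. -/
def ano (o : Option Y) : Module.End (ZMod 2) (Finset Y → ZMod 2) := o.elim 0 an

lemma ano_ano (o o' : Option Y) : ano o * ano o' = ano o' * ano o := by
  cases o <;> cases o' <;> simp [ano, an_an]

lemma ano_cr (o : Option Y) (z : Y) : ano o * cr z = cr z * ano o + if o = some z then 1 else 0 := by
  cases o <;> simp [ano, an_cr]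

lemma two (x : Module.End (ZMod 2) (Finset Y → ZMod 2)) : x + x = 0 := by
  rw [← two_smul (ZMod 2) x]
  have : (2 : ZMod 2) = 0 := rfl
  rw [this, zero_smul]

def crV (Φ : Y → ZMod 2) : Module.End (ZMod 2) (Finset Y → ZMod 2) := ∑ y, Φ y • cr y

def opD (φ : Y → Option Y) : Module.End (ZMod 2) (Finset Y → ZMod 2) := ∑ y, cr y * ano (φ y)

lemma ano_crV (o : Option Y) (Φ : Y → ZMod 2) :
    ano o * crV Φ = crV Φ * ano o + (o.elim 0 Φ) • 1 := by
  unfold crV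
  rw [Finset.mul_sum, Finset.sum_mul]
  simp only [mul_smul_comm, smul_mul_assoc, ano_cr, smul_add, Finset.sum_add_distrib]
  congr 1
  cases o <;> simp [eq_comm]

lemma crV_cr (Φ : Y → ZMod 2) (y : Y) : crV Φ * cr y = cr y * crV Φ := by
  unfold crV
  rw [Finset.mul_sum, Finset.sum_mul]
  refine Finset.sum_congr rfl fun z _ => ?_
  rw [mul_smul_comm, smul_mul_assoc, cr_cr]

lemma opD_crV (φ : Y → Option Y) (Φ : Y → ZMod 2) :
    opD φ * crV Φ + crV Φ * opD φ = crV (fun y => (φ y).elim 0 Φ) := by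
  have h : opD φ * crV Φ = crV Φ * opD φ + crV (fun y => (φ y).elim 0 Φ) := by
    unfold opD
    rw [Finset.mul_sum, Finset.sum_mul]
    conv_rhs => unfold crV
    rw [← Finset.sum_add_distrib]
    refine Finset.sum_congr rfl fun y _ => ?_
    rw [mul_assoc, ano_crV, mul_add, ← mul_assoc, ← crV_cr]
    change _ = crV Φ * _ + _
    rw [mul_assoc]
    simp
  rw [h, add_right_comm, two, zero_add]

lemma opD_cr (φ : Y → Option Y) (z : Y) :
    opD φ * cr z = cr z * opD φ + ∑ y, if φ y = some z then cr y else 0 := by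
  unfold opD
  rw [Finset.mul_sum, Finset.sum_mul, ← Finset.sum_add_distrib]
  refine Finset.sum_congr rfl fun y _ => ?_
  rw [mul_assoc, ano_cr, mul_add, ← mul_assoc, cr_cr, mul_assoc]
  simp

lemma opD_ano (φ : Y → Option Y) (o : Option Y) :
    ano o * opD φ = opD φ * ano o + ano (o.bind φ) := by
  unfold opD
  rw [Finset.mul_sum, Finset.sum_mul]
  have : ∀ y, ano o * (cr y * ano (φ y)) = cr y * ano (φ y) * ano o +
      if o = some y then ano (φ y) else 0 := by
    intro y
    rw [← mul_assoc, ano_cr, add_mul, mul_assoc, ano_ano, ← mul_assoc]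
    simp
  simp only [this, Finset.sum_add_distrib]
  congr 1
  cases o with
  | none => simp [ano]
  | some x => simp

lemma opD_opD (φ ψ : Y → Option Y) : opD φ * opD ψ + opD (fun y => (ψ y).bind φ) =
    opD ψ * opD φ + opD (fun y => (φ y).bind ψ) := by
  have e : ∀ y, opD φ * (cr y * ano (ψ y)) + cr y * ano ((ψ y).bind φ) =
      cr y * ano (ψ y) * opD φ + (∑ x, if φ x = some y then cr x else 0) * ano (ψ y) := by
    intro y
    rw [← mul_assoc, opD_cr, add_mul, mul_assoc (cr y) (ano (ψ y)), opD_ano, mul_add,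
      ← mul_assoc (cr y) (opD φ)]
    abel
  have e2 : ∑ y, (∑ x, if φ x = some y then cr x else 0) * ano (ψ y) =
      opD (fun y => (φ y).bind ψ) := by
    unfold opD
    simp only [Finset.sum_mul]
    rw [Finset.sum_comm]
    refine Finset.sum_congr rfl fun x _ => ?_
    cases h : φ x with
    | none => simp [ano]
    | some z => simp
  rw [← e2]
  conv_lhs => unfold opD
  rw [← opD, Finset.mul_sum, ← Finset.sum_add_distrib]
  rw [Finset.sum_congr rfl fun y _ => e y, Finset.sum_add_distrib, ← Finset.sum_mul]
  rfl

lemma opD_comm (φ ψ : Y → Option Y) (h : ∀ y, (ψ y).bind φ = (φ y).bind ψ) :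
    opD φ * opD ψ + opD ψ * opD φ = 0 := by
  have := opD_opD φ ψ
  rw [funext h] at this
  rw [add_right_cancel this, two]

lemma an_crV (y : Y) (Φ : Y → ZMod 2) : an y * crV Φ + crV Φ * an y = Φ y • 1 := by
  have h : an y * crV Φ = _ := ano_crV (some y) Φ
  rw [h]
  change crV Φ * an y + _ + _ = _
  rw [add_right_comm, two, zero_add]
  rfl

end Fock

namespace MM
variable {M : MM}

/-- The machine halts after exactly `d` steps. -/
def Halts : ℕ → M.Cfg → Prop
  | 0, c => M.step c = none
  | d + 1, c => ∃ c', M.step c = some c' ∧ Halts d c'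

lemma Halts.unique {d e : ℕ} {c : M.Cfg} (h : Halts d c) (h' : Halts e c) : d = e := by
  induction d generalizing e c with
  | zero =>
    cases e with
    | zero => rfl
    | succ e => obtain ⟨c', h1, _⟩ := h'; simp [Halts] at h; simp [h] at h1
  | succ d ih =>
    obtain ⟨c', h1, h2⟩ := h
    cases e with
    | zero => simp [Halts] at h'; simp [h'] at h1
    | succ e =>
      obtain ⟨c'', h3, h4⟩ := h'
      rw [h1] at h3
      cases h3
      rw [ih h2 h4]

/-- Agreement of configurations up to depth `n` in each stack. -/
def Ag (n : ℕ) (c d : M.Cfg) : Prop := c.1 = d.1 ∧ ∀ k, (c.2 k).take n = (d.2 k).take n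

lemma Ag.symm {n : ℕ} {c d : M.Cfg} (h : Ag n c d) : Ag n d c := ⟨h.1.symm, fun k => (h.2 k).symm⟩

lemma take_mono {α : Type} {m n : ℕ} (h : m ≤ n) {l l' : List α} (e : l.take n = l'.take n) :
    l.take m = l'.take m := by
  have := congrArg (List.take m) e
  simpa [List.take_take, min_eq_left h] using this

lemma mapp_ag {n : ℕ} {u : M.U} {β : M.K → List M.Γ} {c d : M.Cfg} (h : mapp u β = some c)
    (ha : Ag (n + 1) c d) : ∃ β', mapp u β' = some d ∧ ∀ k, (β k).take n = (β' k).take n := by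
  obtain ⟨p', δ⟩ := d
  obtain ⟨h1, h2⟩ := ha
  obtain ⟨p, _ | ⟨k, _ | a⟩⟩ := u
  · simp only [mapp, Option.some.injEq] at h
    subst h
    have h1 : p = p' := h1
    subst h1
    exact ⟨δ, rfl, fun k => take_mono (Nat.le_succ n) (h2 k)⟩
  · simp only [mapp] at h
    split_ifs at h with hb
    cases h
    have h1 : p = p' := h1
    subst h1
    refine ⟨δ, ?_, fun k => take_mono (Nat.le_succ n) (h2 k)⟩
    have := h2 k
    simp only [hb, List.take_nil] at this
    have h0 : δ k = [] := by
      cases hd : δ k with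
      | nil => rfl
      | cons a l => rw [hd] at this; simp at this
    simp [mapp, h0]
  · simp only [mapp, Option.some.injEq] at h
    subst h
    have h1 : p = p' := h1
    subst h1
    have hk := h2 k
    simp only [Function.update_self] at hk
    cases hd : δ k with
    | nil => rw [hd] at hk; simp at hk
    | cons b l =>
      rw [hd] at hk
      simp only [List.take_succ_cons, List.cons.injEq] at hk
      obtain ⟨rfl, hk⟩ := hk
      refine ⟨Function.update δ k l, ?_, ?_⟩
      · simp [mapp, ← hd]
      · intro j
        by_cases hj : j = k
        · subst hj; simpa using hk
        · have := h2 j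
          simp only [ne_eq, hj, not_false_eq_true, Function.update_of_ne] at this ⊢
          exact take_mono (Nat.le_succ n) this

lemma mapp_ag' {n : ℕ} {u : M.U} {β β' : M.K → List M.Γ} {c d : M.Cfg} (h : mapp u β = some c)
    (h' : mapp u β' = some d) (ha : ∀ k, (β k).take n = (β' k).take n) : Ag n c d := by
  obtain ⟨p, _ | ⟨k, _ | a⟩⟩ := u
  · simp only [mapp, Option.some.injEq] at h h'
    subst h h'
    exact ⟨rfl, ha⟩
  · simp only [mapp] at h h'
    split_ifs at h h'
    cases h
    cases h'
    exact ⟨rfl, ha⟩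
  · simp only [mapp, Option.some.injEq] at h h'
    subst h h'
    refine ⟨rfl, ?_⟩
    intro j
    by_cases hj : j = k
    · subst hj
      simp only [Function.update_self]
      cases n with
      | zero => simp
      | succ n => simp [take_mono (Nat.le_succ n) (ha j)]
    · simpa [hj] using ha j

lemma step_ag {n : ℕ} {c d c' : M.Cfg} (ha : Ag (n + 1) c d) (h : M.step c = some c') :
    ∃ d', M.step d = some d' ∧ Ag n c' d' := by
  obtain ⟨u, u', β, hr, h1, h2⟩ := M.complete c c' h
  obtain ⟨β', h3, h4⟩ := mapp_ag h1 ha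
  have hs := M.sound u u' hr β'
  rw [h3] at hs
  have hs : M.step d = mapp u' β' := hs
  have hne : ∃ d', mapp u' β' = some d' := by
    obtain ⟨p, _ | ⟨k, _ | a⟩⟩ := u'
    · exact ⟨_, rfl⟩
    · have := (M.bot _ _ hr k).2 rfl
      obtain ⟨q, o⟩ := u
      have this : o = _ := this
      subst this
      simp only [mapp] at h3
      split_ifs at h3 with hb
      exact ⟨(p, β'), by simp [mapp, hb]⟩
    · exact ⟨_, rfl⟩
  obtain ⟨d', hd⟩ := hne
  exact ⟨d', hs.trans hd, mapp_ag' h2 hd h4⟩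

lemma Halts.ag {d : ℕ} {c e : M.Cfg} (h : Halts d c) (ha : Ag (d + 1) c e) : Halts d e := by
  induction d generalizing c e with
  | zero =>
    cases he : M.step e with
    | none => exact he
    | some e' =>
      obtain ⟨c', hc, _⟩ := step_ag ha.symm he
      simp [Halts] at h
      simp [h] at hc
  | succ d ih =>
    obtain ⟨c', h1, h2⟩ := h
    obtain ⟨e', h3, h4⟩ := step_ag ha h1
    exact ⟨e', h3, ih h2 h4⟩

lemma Halts.ag_iff {d : ℕ} {c e : M.Cfg} (ha : Ag (d + 1) c e) : Halts d c ↔ Halts d e :=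
  ⟨fun h => h.ag ha, fun h => h.ag ha.symm⟩

/-! The model -/

variable (M) in
abbrev Bd (T : ℕ) : Type := {l : List M.Γ // l.length ≤ T + 1}

instance (T : ℕ) : Fintype (M.Bd T) := by
  have : Finite (M.Bd T) := List.finite_length_le M.Γ (T + 1)
  exact Fintype.ofFinite _

variable (M) in
abbrev YT (T : ℕ) : Type := Fin (T + 1) × (M.K → M.Bd T)

def trunc (T : ℕ) (l : List M.Γ) : M.Bd T := ⟨l.take (T + 1), by simp⟩

def YT.st {T : ℕ} (y : M.YT T) (k : M.K) : List M.Γ := (y.2 k).1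

def phS {T : ℕ} (l : M.L) (y : M.YT T) : Option (M.YT T) :=
  match l with
  | (k, some a) => some (y.1, Function.update y.2 k (trunc T (a :: y.st k)))
  | (k, none) => if y.st k = [] then some y else none

def phT {T : ℕ} (y : M.YT T) : Option (M.YT T) :=
  if h : (y.1 : ℕ) = 0 then none else some (⟨y.1 - 1, by omega⟩, y.2)

def HU (u : M.U) (d : ℕ) (β : M.K → List M.Γ) : Prop := ∃ c, mapp u β = some c ∧ Halts d c

def ph {T : ℕ} (u : M.U) (y : M.YT T) : ZMod 2 := if HU u y.1 y.st then 1 else 0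

def pull {T : ℕ} : List M.L → M.YT T → Option (M.YT T)
  | [], y => some y
  | l :: w, y => (pull w y).bind (phS l)

lemma pull_append {T : ℕ} (w w' : List M.L) (y : M.YT T) :
    pull (w ++ w') y = (pull w' y).bind (pull w) := by
  induction w with
  | nil => simp only [List.nil_append]; cases pull w' y <;> rfl
  | cons l w ih =>
    simp only [List.cons_append, pull, ih, Option.bind_assoc]

def phW {T : ℕ} (p0 : M.P) (w : List M.L) (y : M.YT T) : ZMod 2 := (pull w y).elim 0 (ph (p0, none))

lemma st_update {T : ℕ} (y : M.YT T) (d : Fin (T + 1)) (k : M.K) (b : M.Bd T) :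
    YT.st ((d, Function.update y.2 k b) : M.YT T) = Function.update y.st k b.1 := by
  funext j
  by_cases h : j = k
  · subst h; simp [YT.st]
  · simp [YT.st, h]

lemma ph_s {T : ℕ} (p : M.P) (l : M.L) (y : M.YT T) :
    (phS l y).elim 0 (ph (p, none)) = ph (p, some l) y := by
  obtain ⟨k, _ | a⟩ := l
  · by_cases h : y.st k = []
    · simp [phS, ph, HU, mapp, h]
    · simp [phS, ph, HU, mapp, h]
  · simp only [phS, Option.elim, ph, HU, mapp, st_update]
    congr 1
    simp only [Option.some.injEq, exists_eq_left', eq_iff_iff]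
    apply Halts.ag_iff
    refine ⟨rfl, ?_⟩
    intro j
    by_cases hj : j = k
    · subst hj
      simp only [Function.update_self, trunc, List.take_take]
      congr 1
      have := y.1.2
      omega
    · simp [hj]

lemma phS_comm {T : ℕ} (l l' : M.L) (h : l.1 ≠ l'.1) (y : M.YT T) :
    (phS l' y).bind (phS l) = (phS l y).bind (phS l') := by
  obtain ⟨k, o⟩ := l
  obtain ⟨k', o'⟩ := l'
  have h : k ≠ k' := h
  have h' := h.symm
  rcases o with _ | a <;> rcases o' with _ | a'
  · by_cases h1 : y.st k = [] <;> by_cases h2 : y.st k' = [] <;> simp [phS, h1, h2]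
  · by_cases h1 : y.st k = [] <;> simp [phS, h1, st_update, h]
  · by_cases h1 : y.st k' = [] <;> simp [phS, h1, st_update, h']
  · simp [phS, st_update, h, h', Function.update_comm h]

lemma phT_comm {T : ℕ} (l : M.L) (y : M.YT T) :
    (phS l y).bind phT = (phT y).bind (phS l) := by
  obtain ⟨k, o⟩ := l
  have hst : ∀ d : Fin (T + 1), YT.st ((d, y.2) : M.YT T) = y.st := fun d => rfl
  rcases o with _ | a
  · by_cases h1 : y.st k = [] <;> by_cases h0 : (y.1 : ℕ) = 0 <;> simp [phS, phT, h1, h0, hst]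
  · by_cases h0 : (y.1 : ℕ) = 0 <;> simp [phS, phT, h0, hst]

lemma ph_t {T : ℕ} (u u' : M.U) (hr : M.Rule u u') (y : M.YT T) :
    (phT y).elim 0 (ph u') = ph u y := by
  have hs := M.sound u u' hr y.st
  unfold phT
  by_cases h0 : (y.1 : ℕ) = 0
  · simp only [h0, dite_true, Option.elim]
    unfold ph HU
    rw [if_neg]
    rintro ⟨c, hc, hh⟩
    rw [h0] at hh
    have hh : M.step c = none := hh
    rw [hc] at hs
    have hs : M.step c = _ := hs
    have hn : mapp u' y.st = none := by rw [← hs, hh]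
    obtain ⟨p, _ | ⟨k, _ | a⟩⟩ := u'
    · simp [mapp] at hn
    · have := (M.bot _ _ hr k).2 rfl
      obtain ⟨q, o⟩ := u
      have this : o = _ := this
      subst this
      simp only [mapp] at hc hn
      split_ifs at hc hn
    · simp [mapp] at hn
  · simp only [h0, dite_false, Option.elim]
    unfold ph
    congr 1
    obtain ⟨d, hd⟩ := Nat.exists_eq_succ_of_ne_zero h0
    have hst : YT.st ((⟨y.1 - 1, by omega⟩, y.2) : M.YT T) = y.st := rfl
    rw [hst]
    simp only [hd, Nat.succ_eq_add_one, Nat.add_sub_cancel, HU, eq_iff_iff]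
    rw [← hs]
    constructor
    · rintro ⟨c', h1, h2⟩
      obtain ⟨c, h3, h4⟩ := Option.bind_eq_some_iff.1 h1
      exact ⟨c, h3, c', h4, h2⟩
    · rintro ⟨c, h3, c', h4, h2⟩
      exact ⟨c', Option.bind_eq_some_iff.2 ⟨c, h3, h4⟩, h2⟩

lemma pull_stack {T : ℕ} (k : M.K) (l : List M.Γ) (y : M.YT T) : pull (stackWord k l) y =
    if y.st k = [] then some (y.1, Function.update y.2 k (trunc T l)) else none := by
  induction l with
  | nil =>
    simp only [stackWord, List.map_nil, List.nil_append, pull, Option.bind_some, phS]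
    split_ifs with h
    · congr 1
      refine Prod.ext rfl ?_
      have : trunc T [] = y.2 k := by
        apply Subtype.ext
        simpa [trunc, YT.st] using h.symm
      rw [this, Function.update_eq_self]
    · rfl
  | cons a l ih =>
    change (pull (stackWord k l) y).bind _ = _
    rw [ih]
    split_ifs with h
    · simp only [Option.bind_some, phS, st_update, Function.update_self, Function.update_idem]
      congr 3
      apply Subtype.ext
      simp only [trunc, List.take_succ_cons, List.take_take]
      congr 2
      omega
    · rfl

lemma pull_cfg {T : ℕ} (β : M.K → List M.Γ) (ks : List M.K) (hnd : ks.Nodup) (y : M.YT T) :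
    pull (cfgWord β ks) y = if ∀ k ∈ ks, y.st k = [] then
      some (y.1, fun k => if k ∈ ks then trunc T (β k) else y.2 k) else none := by
  induction ks with
  | nil => simp [cfgWord, pull]
  | cons j ks ih =>
    obtain ⟨h1, h2⟩ := List.nodup_cons.1 hnd
    change pull (stackWord j (β j) ++ cfgWord β ks) y = _
    rw [pull_append, ih h2]
    by_cases h : ∀ k ∈ ks, y.st k = []
    · rw [if_pos h]
      simp only [Option.bind_some, pull_stack, List.forall_mem_cons, and_iff_left h]
      have e : YT.st ((y.1, fun k => if k ∈ ks then trunc T (β k) else y.2 k) : M.YT T) j = y.st j := by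
        simp [YT.st, h1]
      rw [e]
      split_ifs with h3
      · congr 2
        funext k
        by_cases hk : k = j
        · subst hk; simp
        · simp [hk]
      · rfl
    · have : ¬ ∀ k ∈ j :: ks, y.st k = [] := fun h' => h fun k hk => h' k (by simp [hk])
      rw [if_neg h, if_neg this]
      rfl

lemma phW_last {T : ℕ} (p0 : M.P) (β : M.K → List M.Γ) (y : M.YT T) :
    phW p0 (cfgWord β Finset.univ.toList) y =
      if (∀ k, y.st k = []) ∧ Halts y.1 (p0, β) then 1 else 0 := by
  unfold phW
  rw [pull_cfg _ _ (Finset.nodup_toList _)]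
  simp only [Finset.mem_toList, Finset.mem_univ, true_implies, if_true]
  by_cases h : ∀ k, y.st k = []
  · simp only [h, implies_true, if_true, Option.elim, ph, HU, mapp, Option.some.injEq,
      exists_eq_left', true_and]
    congr 1
    rw [eq_iff_iff]
    apply Halts.ag_iff
    refine ⟨rfl, ?_⟩
    intro k
    simp only [YT.st, trunc, List.take_take]
    congr 1
    have := y.1.2
    omega
  · simp [h]

def opI {ls : List M.L} (p0 : M.P) (T : ℕ) : M.Ix ls → Module.End (ZMod 2) (Finset (M.YT T) → ZMod 2)
  | .inl 0 => 0
  | .inl 1 => 1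
  | .inl 2 => Fock.opD phT
  | .inl 3 => Fock.an (Fin.last T, fun _ => ⟨[], by simp⟩)
  | .inr (.inl l) => Fock.opD (phS l)
  | .inr (.inr (.inl u)) => Fock.crV (ph u)
  | .inr (.inr (.inr j)) => Fock.crV (phW p0 (ls.take (j + 1)))

lemma opI_w {ls : List M.L} (p0 : M.P) (T : ℕ) (i : ℕ) (hi : i ≤ ls.length) :
    opI p0 T (iw p0 i : M.Ix ls) = Fock.crV (phW p0 (ls.take i)) := by
  cases i with
  | zero =>
    change Fock.crV (ph (p0, none)) = _
    rw [List.take_zero]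
    rfl
  | succ j =>
    change Fock.crV (phW p0 (ls.take ((j % (ls.length + 1)) + 1))) = _
    rw [Nat.mod_eq_of_lt (by omega)]

theorem upper {p0 : M.P} {ls : List M.L} {β0 : M.K → List M.Γ}
    (hls : ls = cfgWord β0 Finset.univ.toList) {T : ℕ} (hT : Halts T (p0, β0)) :
    (M.toRSys p0 ls).Sat (Finset (M.YT T) → ZMod 2) (fun i => (opI p0 T i).toAddMonoidHom) := by
  have hrel : ∀ i j k, MRel p0 ls i j k → opI p0 T i * opI p0 T j + opI p0 T j * opI p0 T i =
      opI p0 T k := by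
    intro i j k h
    cases h with
    | sx p l =>
      refine (Fock.opD_crV (phS l) (ph (p, none))).trans ?_
      change _ = Fock.crV (ph (p, some l))
      congr 1
      funext y
      exact ph_s p l y
    | ss l l' h => exact Fock.opD_comm _ _ (phS_comm l l' h)
    | ts l => exact Fock.opD_comm _ _ (phT_comm l)
    | rule u u' h =>
      refine (Fock.opD_crV phT (ph u')).trans ?_
      change _ = Fock.crV (ph u)
      congr 1
      funext y
      exact ph_t u u' h y
    | wi i h =>
      rw [opI_w p0 T i h.le, opI_w p0 T (i + 1) h]
      refine (Fock.opD_crV (phS ls[i]) _).trans ?_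
      congr 1
      funext y
      rw [List.take_succ_eq_append_getElem h]
      unfold phW
      rw [pull_append]
      have : pull [ls[i]] y = phS ls[i] y := rfl
      rw [this]
      cases phS ls[i] y <;> rfl
    | wt =>
      rw [opI_w p0 T _ le_rfl, List.take_length]
      refine (Fock.opD_crV phT _).trans ?_
      have : (fun y : M.YT T => (phT y).elim 0 (phW p0 ls)) = fun _ => 0 := by
        funext y
        unfold phT
        by_cases h0 : (y.1 : ℕ) = 0
        · simp [h0]
        · simp only [h0, dite_false, Option.elim]
          rw [hls, phW_last, if_neg]
          rintro ⟨_, h⟩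
          have := h.unique hT
          have h3 := y.1.2
          simp only at this
          omega
      rw [this]
      change _ = (0 : Module.End (ZMod 2) (Finset (M.YT T) → ZMod 2))
      simp [Fock.crV]
    | wc =>
      rw [opI_w p0 T _ le_rfl, List.take_length]
      refine (Fock.an_crV _ _).trans ?_
      rw [hls, phW_last, if_pos]
      · rw [one_smul]; rfl
      · exact ⟨fun k => rfl, hT⟩
  constructor
  · intro x
    exact LinearMap.congr_fun (Fock.two (1 : Module.End (ZMod 2) (Finset (M.YT T) → ZMod 2))) x
  · intro x; rfl
  · intro x; rfl
  · intro i j k h x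
    exact LinearMap.congr_fun (hrel i j k h) x

/-- The network associated with a halting run. -/
theorem exists_network (p0 : M.P) (β0 : M.K → List M.Γ) (T : ℕ) (hT : Halts T (p0, β0)) :
    ∃ net : Network, NetworkValid net ∧
      NetworkSizeLE net ((1000 * (4 + (Fintype.card M.L + (Fintype.card M.U +
        ((cfgWord β0 Finset.univ.toList).length + 1))) + 1)) ^ 10) ∧ Solvable net ∧
      ∀ q, 2 ≤ q → SolvableWith net q → T + 1 ≤ q ^ q := by
  obtain ⟨net, h1, h2, h3, h4⟩ := (M.toRSys p0 (cfgWord β0 Finset.univ.toList)).exists_network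
  refine ⟨net, h1, ?_, ?_, ?_⟩
  · rw [card_toRSys] at h2; exact h2
  · refine ⟨_, ?_, h4 _ _ (upper rfl hT)⟩
    have : 1 < Fintype.card (Finset (M.YT T) → ZMod 2) := Fintype.one_lt_card
    exact this
  · intro q hq hs
    obtain ⟨_, r, hr⟩ := h3 q (by omega) hs
    have : Nontrivial (Fin q) := Fin.nontrivial_iff_two_le.2 hq
    have hst : ∃ c, steps T (p0, β0) = some c := by
      clear hr r
      generalize (p0, β0) = c at hT
      induction T generalizing c with
      | zero => exact ⟨c, rfl⟩
      | succ T ih =>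
        obtain ⟨c', h1, h2⟩ := hT
        obtain ⟨c'', h⟩ := ih _ h2
        exact ⟨c'', by simp [steps, h1, h]⟩
    obtain ⟨c, hc⟩ := hst
    refine (lower this rfl hr hc).trans ?_
    have h := Nat.card_le_card_of_injective (fun f : Fin q →+ Fin q => (f : Fin q → Fin q))
      DFunLike.coe_injective
    simpa using h

end MM

namespace TMC
open Turing Turing.TM2

section
variable {K Γ Λ σ : Type}

abbrev PQ (K Γ Λ σ : Type) : Type := Option (Stmt (fun _ : K => Γ) Λ σ) × σ

variable (M : Λ → Stmt (fun _ : K => Γ) Λ σ)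

/-- Elementary steps of a TM2 machine. -/
def pstep : PQ K Γ Λ σ × (K → List Γ) → Option (PQ K Γ Λ σ × (K → List Γ))
  | ((none, _), _) => none
  | ((some (.push k f q), v), β) => some ((some q, v), Function.update β k (f v :: β k))
  | ((some (.peek k f q), v), β) => some ((some q, f v (β k).head?), β)
  | ((some (.pop k f q), v), β) => some ((some q, f v (β k).head?), Function.update β k (β k).tail)
  | ((some (.load f q), v), β) => some ((some q, f v), β)
  | ((some (.branch f q₁ q₂), v), β) => some ((some (cond (f v) q₁ q₂), v), β)
  | ((some (.goto f), v), β) => some ((some (M (f v)), v), β)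
  | ((some .halt, v), β) => some ((none, v), β)

inductive TR : PQ K Γ Λ σ × Option (K × Option Γ) → PQ K Γ Λ σ × Option (K × Option Γ) → Prop
  | push (k : K) (f : σ → Γ) (q) (v : σ) :
      TR ((some (.push k f q), v), none) ((some q, v), some (k, some (f v)))
  | peek (k : K) (f : σ → Option Γ → σ) (q) (v : σ) (o : Option Γ) :
      TR ((some (.peek k f q), v), some (k, o)) ((some q, f v o), some (k, o))
  | pop (k : K) (f : σ → Option Γ → σ) (q) (v : σ) (a : Γ) :
      TR ((some (.pop k f q), v), some (k, some a)) ((some q, f v (some a)), none)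
  | pope (k : K) (f : σ → Option Γ → σ) (q) (v : σ) :
      TR ((some (.pop k f q), v), some (k, none)) ((some q, f v none), some (k, none))
  | load (f : σ → σ) (q) (v : σ) : TR ((some (.load f q), v), none) ((some q, f v), none)
  | branch (f : σ → Bool) (q₁ q₂) (v : σ) :
      TR ((some (.branch f q₁ q₂), v), none) ((some (cond (f v) q₁ q₂), v), none)
  | goto (f : σ → Λ) (v : σ) : TR ((some (.goto f), v), none) ((some (M (f v)), v), none)
  | halt (v : σ) : TR ((some .halt, v), none) ((none, v), none)

lemma tr_bot (u u' : PQ K Γ Λ σ × Option (K × Option Γ)) (h : TR M u u') (k : K) :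
    u.2 = some (k, none) ↔ u'.2 = some (k, none) := by
  cases h <;> simp

lemma tr_sound (u u' : PQ K Γ Λ σ × Option (K × Option Γ)) (h : TR M u u') (β : K → List Γ) :
    (mapp u β).bind (pstep M) = mapp u' β := by
  cases h with
  | peek k f q v o =>
    cases o with
    | none => by_cases hb : β k = [] <;> simp [mapp, pstep, hb]
    | some a => simp [mapp, pstep]
  | pope k f q v =>
    by_cases hb : β k = []
    · have : Function.update β k [] = β := by rw [← hb, Function.update_eq_self]
      simp [mapp, pstep, hb, this]
    · simp [mapp, hb]
  | _ => simp [mapp, pstep]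

lemma tr_complete (c c' : PQ K Γ Λ σ × (K → List Γ)) (h : pstep M c = some c') :
    ∃ u u' β, TR M u u' ∧ mapp u β = some c ∧ mapp u' β = some c' := by
  obtain ⟨⟨o, v⟩, β⟩ := c
  cases o with
  | none => simp [pstep] at h
  | some s =>
    cases s with
    | push k f q =>
      simp only [pstep, Option.some.injEq] at h; subst h
      exact ⟨_, _, β, .push k f q v, rfl, rfl⟩
    | peek k f q =>
      simp only [pstep, Option.some.injEq] at h; subst h
      cases hb : β k with
      | nil => exact ⟨_, _, β, .peek k f q v none, by simp [mapp, hb], by simp [mapp, hb]⟩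
      | cons a l =>
        refine ⟨_, _, Function.update β k l, .peek k f q v (some a), ?_, ?_⟩
        · simp [mapp, ← hb]
        · simp [mapp, ← hb]
          rw [hb]
          rfl
    | pop k f q =>
      simp only [pstep, Option.some.injEq] at h; subst h
      cases hb : β k with
      | nil =>
        have : Function.update β k [] = β := by rw [← hb, Function.update_eq_self]
        exact ⟨_, _, β, .pope k f q v, by simp [mapp, hb], by simp [mapp, hb, this]⟩
      | cons a l =>
        refine ⟨_, _, Function.update β k l, .pop k f q v a, ?_, ?_⟩
        · simp [mapp, ← hb]
        · simp [mapp]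
    | load f q =>
      simp only [pstep, Option.some.injEq] at h; subst h
      exact ⟨_, _, β, .load f q v, rfl, rfl⟩
    | branch f q₁ q₂ =>
      simp only [pstep, Option.some.injEq] at h; subst h
      exact ⟨_, _, β, .branch f q₁ q₂ v, rfl, rfl⟩
    | goto f =>
      simp only [pstep, Option.some.injEq] at h; subst h
      exact ⟨_, _, β, .goto f v, rfl, rfl⟩
    | halt =>
      simp only [pstep, Option.some.injEq] at h; subst h
      exact ⟨_, _, β, .halt v, rfl, rfl⟩

lemma mapp_val {Q : Type} {F : Set Q} (p : F) (o : Option (K × Option Γ)) (β : K → List Γ) :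
    mapp (p.1, o) β = (mapp (p, o) β).map (fun c => (c.1.1, c.2)) := by
  rcases o with _ | ⟨k, _ | a⟩
  · rfl
  · by_cases h : β k = [] <;> simp [mapp, h]
  · rfl

lemma mapp_fst {Q : Type} {u : Q × Option (K × Option Γ)} {β : K → List Γ} {c}
    (h : mapp u β = some c) : c.1 = u.1 := by
  obtain ⟨p, _ | ⟨k, _ | a⟩⟩ := u
  · simp [mapp] at h; rw [← h]
  · simp [mapp] at h; rw [← h.2]
  · simp [mapp] at h; rw [← h]

/-- Restriction of the elementary machine to finitely many states. -/
def restr [Fintype K] [Fintype Γ] (F : Set (PQ K Γ Λ σ)) [Fintype F] : MM where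
  P := F
  K := K
  Γ := Γ
  step c := (pstep M (c.1.1, c.2)).bind fun c' => if h : c'.1 ∈ F then some (⟨c'.1, h⟩, c'.2) else none
  Rule u u' := TR M (u.1.1, u.2) (u'.1.1, u'.2)
  bot u u' h k := tr_bot M _ _ h k
  sound u u' h β := by
    obtain ⟨p, o⟩ := u
    obtain ⟨p', o'⟩ := u'
    have hs := tr_sound M _ _ h β
    rw [mapp_val, mapp_val] at hs
    cases h1 : mapp (p, o) β with
    | none =>
      rw [h1] at hs
      simp only [Option.map_none, Option.bind_none] at hs
      exact (Option.map_eq_none_iff.1 hs.symm).symm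
    | some c =>
      rw [h1] at hs
      simp only [Option.map_some, Option.bind_some] at hs ⊢
      rw [hs]
      cases h2 : mapp (p', o') β with
      | none => rfl
      | some c' => simp
  complete c c' h := by
    obtain ⟨d, h1, h2⟩ := Option.bind_eq_some_iff.1 h
    split_ifs at h2 with hd
    simp only [Option.some.injEq] at h2
    subst h2
    obtain ⟨⟨p, o⟩, ⟨p', o'⟩, β, hr, h3, h4⟩ := tr_complete M _ _ h1
    have e1 := mapp_fst h3
    have e2 := mapp_fst h4
    simp only at e1 e2
    have hp : p ∈ F := by rw [← e1]; exact c.1.2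
    have hp' : p' ∈ F := by rw [← e2]; exact hd
    refine ⟨(⟨p, hp⟩, o), (⟨p', hp'⟩, o'), β, hr, ?_, ?_⟩
    · rw [mapp_val ⟨p, hp⟩] at h3
      obtain ⟨x, hx, hx'⟩ := Option.map_eq_some_iff.1 h3
      rw [hx]
      congr 1
      simp only [Prod.mk.injEq] at hx'
      exact Prod.ext (Subtype.ext hx'.1) hx'.2
    · rw [mapp_val ⟨p', hp'⟩] at h4
      obtain ⟨x, hx, hx'⟩ := Option.map_eq_some_iff.1 h4
      rw [hx]
      congr 1
      subst hx'
      rfl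

def psteps : ℕ → PQ K Γ Λ σ × (K → List Γ) → Option (PQ K Γ Λ σ × (K → List Γ))
  | 0, c => some c
  | n + 1, c => (pstep M c).bind (psteps n)

lemma psteps_add {m n : ℕ} {a b c} (h : psteps M m a = some b) (h' : psteps M n b = some c) :
    psteps M (m + n) a = some c := by
  induction m generalizing a with
  | zero => simp [psteps] at h; subst h; simpa using h'
  | succ m ih =>
    obtain ⟨d, h1, h2⟩ := Option.bind_eq_some_iff.1 h
    rw [Nat.succ_add]
    simp [psteps, h1, ih h2]

/-- Encoding of TM2 configurations. -/
def enc (c : Turing.TM2.Cfg (fun _ : K => Γ) Λ σ) : PQ K Γ Λ σ × (K → List Γ) := ((c.l.map M, c.var), c.stk)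

lemma sim_aux (q : Stmt (fun _ : K => Γ) Λ σ) (v : σ) (β : K → List Γ) :
    ∃ n, psteps M n ((some q, v), β) = some (enc M (stepAux q v β)) := by
  induction q generalizing v β with
  | push k f q ih => obtain ⟨n, h⟩ := ih v (Function.update β k (f v :: β k)); exact ⟨n + 1, h⟩
  | peek k f q ih => obtain ⟨n, h⟩ := ih (f v (β k).head?) β; exact ⟨n + 1, h⟩
  | pop k f q ih =>
    obtain ⟨n, h⟩ := ih (f v (β k).head?) (Function.update β k (β k).tail); exact ⟨n + 1, h⟩
  | load f q ih => obtain ⟨n, h⟩ := ih (f v) β; exact ⟨n + 1, h⟩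
  | branch f q₁ q₂ ih₁ ih₂ =>
    cases hf : f v with
    | true =>
      obtain ⟨n, h⟩ := ih₁ v β
      exact ⟨n + 1, by simpa [psteps, pstep, stepAux, hf] using h⟩
    | false =>
      obtain ⟨n, h⟩ := ih₂ v β
      exact ⟨n + 1, by simpa [psteps, pstep, stepAux, hf] using h⟩
  | goto f => exact ⟨1, rfl⟩
  | halt => exact ⟨1, rfl⟩

lemma sim (c c' : Turing.TM2.Cfg (fun _ : K => Γ) Λ σ) (h : StateTransition.Reaches (step M) c c') :
    ∃ n, psteps M n (enc M c) = some (enc M c') := by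
  induction h with
  | refl => exact ⟨0, rfl⟩
  | @tail b c' _ h ih =>
    obtain ⟨n, hn⟩ := ih
    obtain ⟨l, v, β⟩ := b
    cases l with
    | none => simp [step] at h
    | some l =>
      simp only [step, Option.mem_def, Option.some.injEq] at h
      subst h
      obtain ⟨k, hk⟩ := sim_aux M (M l) v β
      exact ⟨n + k, psteps_add M hn hk⟩

variable (S : Finset Λ)

def FS : Set (PQ K Γ Λ σ) := {p | p.1 ∈ stmts M S}

instance [Fintype σ] : Fintype (FS M S) := by
  have : (FS M S) = (((stmts M S : Finset _) : Set _) ×ˢ Set.univ) := by ext; simp [FS]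
  have : (FS M S).Finite := by
    rw [this]
    exact (Finset.finite_toSet _).prod Set.finite_univ
  exact this.fintype

lemma FS_closed (hS : ∀ l ∈ S, SupportsStmt S (M l)) (c c') (h : pstep M c = some c')
    (hc : c.1 ∈ FS M S) : c'.1 ∈ FS M S := by
  obtain ⟨⟨o, v⟩, β⟩ := c
  cases o with
  | none => simp [pstep] at h
  | some s =>
    have hc : some s ∈ stmts M S := hc
    have hself : ∀ q : Stmt (fun _ : K => Γ) Λ σ, q ∈ stmts₁ q := fun q => stmts₁_self
    cases s with
    | push k f q =>
      simp only [pstep, Option.some.injEq] at h; subst h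
      exact stmts_trans (q₁ := q) (by simp [stmts₁, hself]) hc
    | peek k f q =>
      simp only [pstep, Option.some.injEq] at h; subst h
      exact stmts_trans (q₁ := q) (by simp [stmts₁, hself]) hc
    | pop k f q =>
      simp only [pstep, Option.some.injEq] at h; subst h
      exact stmts_trans (q₁ := q) (by simp [stmts₁, hself]) hc
    | load f q =>
      simp only [pstep, Option.some.injEq] at h; subst h
      exact stmts_trans (q₁ := q) (by simp [stmts₁, hself]) hc
    | branch f q₁ q₂ =>
      simp only [pstep, Option.some.injEq] at h; subst h
      refine stmts_trans (q₁ := cond (f v) q₁ q₂) ?_ hc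
      cases f v <;> simp [stmts₁, hself]
    | goto f =>
      simp only [pstep, Option.some.injEq] at h; subst h
      change some _ ∈ stmts M S
      simp only [stmts, Finset.mem_insertNone, Finset.mem_biUnion, Option.mem_def,
        Option.some.injEq, forall_eq'] at hc ⊢
      obtain ⟨l, hl, h⟩ := hc
      exact ⟨f v, stmts₁_supportsStmt_mono h (hS l hl) v, hself _⟩
    | halt =>
      simp only [pstep, Option.some.injEq] at h; subst h
      change none ∈ stmts M S
      simp [stmts]

lemma halts_restr [Fintype K] [Fintype Γ] [Fintype σ] (hS : ∀ l ∈ S, SupportsStmt S (M l)) (n : ℕ)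
    (c : (restr M (FS M S)).Cfg) (c') (h : psteps M n (c.1.1, c.2) = some c')
    (h' : pstep M c' = none) : MM.Halts n c := by
  induction n generalizing c with
  | zero =>
    simp only [psteps, Option.some.injEq] at h
    rw [← h] at h'
    change (pstep M _).bind _ = none
    rw [h']; rfl
  | succ n ih =>
    obtain ⟨d, h1, h2⟩ := Option.bind_eq_some_iff.1 h
    have hd := FS_closed M S hS _ _ h1 c.1.2
    refine ⟨(⟨d.1, hd⟩, d.2), ?_, ih _ h2⟩
    change (pstep M _).bind _ = _
    rw [h1]
    simp [hd]
    rfl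

lemma psteps_length (n : ℕ) (c c') (h : psteps M n c = some c') (k : K) :
    (c'.2 k).length ≤ (c.2 k).length + n := by
  induction n generalizing c with
  | zero => simp [psteps] at h; subst h; simp
  | succ n ih =>
    obtain ⟨d, h1, h2⟩ := Option.bind_eq_some_iff.1 h
    refine (ih _ h2).trans ?_
    suffices (d.2 k).length ≤ (c.2 k).length + 1 by omega
    obtain ⟨u, u', β, -, h3, h4⟩ := tr_complete M _ _ h1
    have key : ∀ (u : PQ K Γ Λ σ × Option (K × Option Γ)) c, mapp u β = some c →
        (β k).length ≤ (c.2 k).length ∧ (c.2 k).length ≤ (β k).length + 1 := by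
      rintro ⟨p, _ | ⟨j, _ | a⟩⟩ c h
      · simp [mapp] at h; subst h; simp
      · simp [mapp] at h; obtain ⟨_, rfl⟩ := h; simp
      · simp only [mapp, Option.some.injEq] at h
        subst h
        by_cases hj : k = j
        · subst hj; simp
        · simp [hj]
    exact (key u' d h4).2.trans (Nat.add_le_add_right (key u c h3).1 1)

/-- Networks from TM2 computations. -/
theorem tm2_network [Fintype K] [Fintype Γ] [Fintype σ] (hS : ∀ l ∈ S, SupportsStmt S (M l)) :
    ∃ A : ℕ, ∀ l ∈ S, ∀ (v : σ) (β : K → List Γ) (m : ℕ), (∀ k, (β k).length ≤ m) → ∀ c',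
      c' ∈ StateTransition.eval (step M) ⟨some l, v, β⟩ →
      ∃ net : Network, NetworkValid net ∧ NetworkSizeLE net ((A * (m + 1)) ^ 10) ∧ Solvable net ∧
        ∀ q, 2 ≤ q → SolvableWith net q → ∀ k, (c'.stk k).length ≤ m + q ^ q := by
  let N := restr M (FS M S)
  refine ⟨1000 * (6 + Fintype.card N.L + Fintype.card N.U + Fintype.card K), ?_⟩
  intro l hl v β m hm c' hc'
  obtain ⟨hr, hn⟩ := StateTransition.mem_eval.1 hc'
  obtain ⟨T, hT⟩ := sim M _ _ hr
  have hhalted : pstep M (enc M c') = none := by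
    obtain ⟨l', v', β'⟩ := c'
    cases l' with
    | none => rfl
    | some l' => simp [step] at hn
  have hmem : ((some (M l), v) : PQ K Γ Λ σ) ∈ FS M S := by
    change some _ ∈ stmts M S
    simp only [stmts, Finset.mem_insertNone, Finset.mem_biUnion, Option.mem_def,
        Option.some.injEq, forall_eq']
    exact ⟨l, hl, stmts₁_self⟩
  have hH := halts_restr M S hS T (⟨(some (M l), v), hmem⟩, β) _ hT hhalted
  obtain ⟨net, h1, h2, h3, h4⟩ := MM.exists_network _ _ _ hH
  refine ⟨net, h1, ?_, h3, ?_⟩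
  · have hlen : (MM.cfgWord (M := N) β Finset.univ.toList).length ≤ Fintype.card K * (m + 1) := by
      unfold MM.cfgWord
      rw [List.length_flatMap]
      refine (List.sum_le_card_nsmul _ (m + 1) ?_).trans ?_
      · intro x hx
        obtain ⟨k, -, rfl⟩ := List.mem_map.1 hx
        simp [MM.stackWord]
        exact (List.length_map _).le.trans (hm k)
      · simp
        exact le_rfl
    have : (1000 * (4 + (Fintype.card N.L + (Fintype.card N.U +
        ((MM.cfgWord (M := N) β Finset.univ.toList).length + 1))) + 1)) ^ 10 ≤
        ((1000 * (6 + Fintype.card N.L + Fintype.card N.U + Fintype.card K)) * (m + 1)) ^ 10 := by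
      apply Nat.pow_le_pow_left
      rw [mul_assoc]
      apply Nat.mul_le_mul_left
      nlinarith [Nat.zero_le (Fintype.card N.L * m), Nat.zero_le (Fintype.card N.U * m)]
    obtain ⟨n, s, edges, acc, dem⟩ := net
    exact ⟨h2.1.trans this, h2.2.1.trans this, h2.2.2.trans this⟩
  · intro q hq hs k
    have e1 := psteps_length M T _ _ hT k
    have e2 := h4 q hq hs
    have e3 := hm k
    change (c'.stk k).length ≤ (β k).length + T at e1
    omega
end

open Turing.ToPartrec Turing.PartrecToTM2

instance : Fintype K' := ⟨{K'.main, K'.rev, K'.aux, K'.stack}, by intro x; cases x <;> simp⟩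

lemma trPosNum_length (n : PosNum) : (n : ℕ) < 2 ^ (trPosNum n).length ∧ (trPosNum n).length ≤ (n : ℕ) := by
  induction n with
  | one => simp [trPosNum]
  | bit0 n ih =>
    have := PosNum.to_nat_pos n
    simp [trPosNum, pow_succ]; omega
  | bit1 n ih => simp [trPosNum, pow_succ]; omega

lemma trNat_length (n : ℕ) : n < 2 ^ (trNat n).length ∧ (trNat n).length ≤ n := by
  have h : ((n : Num) : ℕ) = n := by simp
  unfold trNat
  generalize hN : (n : Num) = N at h
  cases N with
  | zero => simp at h; subst h; simp [trNum]
  | pos p =>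
    have := trPosNum_length p
    simp at h
    rw [h] at this
    exact this

theorem exists_family (F : ℕ → ℕ) (hF : Computable F) : ∃ A : ℕ, ∀ m, ∃ net : Network,
    NetworkValid net ∧ NetworkSizeLE net ((A * (m + 2)) ^ 10) ∧ Solvable net ∧
      ∀ q, 2 ≤ q → SolvableWith net q → F m < 2 ^ (m + q ^ q) := by
  have hP : Nat.Partrec' (n := 1) (fun v => (F v.head : Part ℕ)) :=
    (Nat.Partrec'.part_iff₁ (f := fun n => (F n : Part ℕ))).2 hF
  obtain ⟨c, hc⟩ := Code.exists_code hP
  have hsup := tr_supports c Cont'.halt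
  obtain ⟨A, hA⟩ := tm2_network tr (codeSupp c Cont'.halt) hsup.2
  refine ⟨A, fun m => ?_⟩
  have hev : PartrecToTM2.halt [F m] ∈ StateTransition.eval (step tr) (PartrecToTM2.init c [m]) := by
    rw [tr_eval]
    have := hc ⟨[m], rfl⟩
    simp only at this
    rw [this]
    simp
    exact Part.mem_some _
  have hinst : (fun a b : K' => Classical.propDecidable (a = b)) = instDecidableEqK' :=
    Subsingleton.elim _ _
  obtain ⟨net, h1, h2, h3, h4⟩ := hA (trNormal c Cont'.halt) hsup.1 none
    (K'.elim (trList [m]) [] [] []) (m + 1) (by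
      intro k
      cases k <;> simp [K'.elim, trList]
      exact (trNat_length m).2) (PartrecToTM2.halt [F m]) (by
      rw [hinst]
      exact hev)
  refine ⟨net, h1, h2, h3, fun q hq hs => ?_⟩
  have := h4 q hq hs K'.main
  have e : ((PartrecToTM2.halt [F m]).stk K'.main).length = (trNat (F m)).length + 1 := by
    change (trList [F m]).length = _
    simp [trList]
  rw [e] at this
  exact (trNat_length (F m)).1.trans_le (Nat.pow_le_pow_right (by norm_num) (by omega))

end TMC

lemma map_of_subset {α : Type} {l l' : List ℕ} (h : ∀ i ∈ l, i ∈ l') :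
    ∃ g : List α → List α, ∀ M : ℕ → α, l.map M = g (l'.map M) := by
  refine ⟨fun x => if h : ∃ M : ℕ → α, x = l'.map M then l.map h.choose else [], fun M => ?_⟩
  have hex : ∃ M' : ℕ → α, l'.map M = l'.map M' := ⟨M, rfl⟩
  beta_reduce
  rw [dif_pos hex]
  have hs := hex.choose_spec
  refine List.map_congr_left fun i hi => ?_
  exact List.map_inj_left.1 hs i (h i hi)

lemma Pr_one_of_mem {Ω : Type} {p : Ω → ℝ} (hp : IsProb p) {S : Set Ω}
    (h : ∀ ω, 0 < p ω → ω ∈ S) : Pr p S = 1 := by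
  rw [← hp.2, Pr_eq_tsum, Pr_eq_tsum, Set.indicator_univ]
  congr 1
  ext ω
  by_cases hω : ω ∈ S
  · rw [Set.indicator_of_mem hω]
  · rw [Set.indicator_of_notMem hω]
    by_contra hne
    exact hω (h ω (lt_of_le_of_ne (hp.1 ω) hne))

lemma solvableWith_congr {n s : ℕ} {edges : List (ℕ × ℕ)} {acc acc' dem dem' : List (List ℕ)}
    (hacc : ∀ v < n, ∀ i, i ∈ acc.getD v [] → i ∈ acc'.getD v [])
    (hdem : ∀ v < n, ∀ i, i ∈ dem'.getD v [] → i ∈ dem.getD v []) {q : ℕ}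
    (h : SolvableWith (n, s, edges, acc, dem) q) : SolvableWith (n, s, edges, acc', dem') q := by
  obtain ⟨Ω, p, hp, M, X, h1, h2⟩ := h
  refine ⟨Ω, p, hp, M, X, h1, fun v hv => ?_⟩
  obtain ⟨f, hf⟩ := h2 v hv
  obtain ⟨ga, hga⟩ := map_of_subset (α := Fin q) (hacc v hv)
  obtain ⟨gd, hgd⟩ := map_of_subset (α := Fin q) (hdem v hv)
  refine ⟨fun y => (gd (f (ga y.1, y.2)).1, (f (ga y.1, y.2)).2), ?_⟩
  refine Pr_one_of_mem hp fun ω hω => ?_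
  have hm := mem_of_Pr_one hp hf hω
  simp only [Set.mem_ofPred_eq] at hm ⊢
  rw [← hga (fun i => M i ω), ← hm, ← hgd (fun i => M i ω)]

theorem qMax_bdd (m : ℕ) : BddAbove {q | ∃ net : Network, NetworkValid net ∧ NetworkSizeLE net m ∧
    Solvable net ∧ q = minAlphabet net} := by
  let Ky : Type := ℕ × ℕ × List (ℕ × ℕ) × (Fin m → Fin m → Prop) × (Fin m → Fin m → Prop)
  let key : Network → Ky := fun net => (net.1, net.2.1, net.2.2.1,
    fun v i => (i : ℕ) ∈ net.2.2.2.1.getD v [], fun v i => (i : ℕ) ∈ net.2.2.2.2.getD v [])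
  have hfin : {k : Ky | ∃ net, NetworkValid net ∧ NetworkSizeLE net m ∧ key net = k}.Finite := by
    have hE : {l : List (ℕ × ℕ) | l.length ≤ m ∧ ∀ e ∈ l, e.1 < m ∧ e.2 < m}.Finite := by
      refine ((List.finite_length_le (Fin m × Fin m) m).image
        (List.map fun e => ((e.1 : ℕ), (e.2 : ℕ)))).subset ?_
      rintro l ⟨h1, h2⟩
      refine ⟨l.pmap (fun e he => (⟨e.1, he.1⟩, ⟨e.2, he.2⟩)) h2, ?_, ?_⟩
      · simpa using h1
      · simp [List.map_pmap]
    refine ((Set.finite_Iic m).prod ((Set.finite_Iic m).prod (hE.prod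
      ((Set.finite_univ (α := Fin m → Fin m → Prop)).prod
        (Set.finite_univ (α := Fin m → Fin m → Prop)))))).subset ?_
    rintro k ⟨⟨n, s, edges, acc, dem⟩, hv, hs, rfl⟩
    obtain ⟨v1, -⟩ := hv
    obtain ⟨s1, s2, s3⟩ := hs
    refine ⟨s1, s3, ⟨s2, fun e he => ?_⟩, trivial, trivial⟩
    have := v1 e he
    omega
  have hkey : ∀ a b : Network, NetworkValid a → NetworkSizeLE a m → NetworkValid b →
      NetworkSizeLE b m → key a = key b → ∀ q, SolvableWith a q → SolvableWith b q := by
    rintro ⟨n, s, edges, acc, dem⟩ ⟨n', s', edges', acc', dem'⟩ va sa vb sb hk q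
    have k1 : n = n' := congrArg (fun k : Ky => k.1) hk
    have k2 : s = s' := congrArg (fun k : Ky => k.2.1) hk
    have k3 : edges = edges' := congrArg (fun k : Ky => k.2.2.1) hk
    have h1 := congrArg (fun k : Ky => k.2.2.2.1) hk
    have h2 := congrArg (fun k : Ky => k.2.2.2.2) hk
    subst k1 k2 k3
    obtain ⟨-, -, a1, a2, a3, a4⟩ := va
    obtain ⟨-, -, b1, b2, b3, b4⟩ := vb
    obtain ⟨s1, s2, s3⟩ := sa
    have hlt : ∀ l : List (List ℕ), (∀ x ∈ l, ∀ i ∈ x, i < s) → ∀ v i, i ∈ l.getD v [] → i < s := by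
      intro l hl v i hi
      by_cases hv : v < l.length
      · rw [List.getD_eq_getElem _ _ hv] at hi
        exact hl _ (List.getElem_mem hv) i hi
      · rw [List.getD_eq_default _ _ (by omega)] at hi
        simp at hi
    refine solvableWith_congr (fun v hv i hi => ?_) (fun v hv i hi => ?_)
    · have hi' := hlt _ a3 v i hi
      have := congrFun (congrFun h1 ⟨v, by omega⟩) ⟨i, by omega⟩
      exact Eq.mp this hi
    · have hi' := hlt _ b4 v i hi
      have := congrFun (congrFun h2 ⟨v, by omega⟩) ⟨i, by omega⟩
      exact Eq.mpr this hi
  refine Set.Finite.bddAbove ?_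
  refine (hfin.image (fun k : Ky => if h : ∃ net, NetworkValid net ∧ NetworkSizeLE net m ∧
    key net = k then minAlphabet h.choose else 0)).subset ?_
  rintro q ⟨net, h1, h2, -, rfl⟩
  refine ⟨key net, ⟨net, h1, h2, rfl⟩, ?_⟩
  have hex : ∃ net', NetworkValid net' ∧ NetworkSizeLE net' m ∧ key net' = key net :=
    ⟨net, h1, h2, rfl⟩
  simp only
  rw [dif_pos hex]
  obtain ⟨c1, c2, c3⟩ := hex.choose_spec
  unfold minAlphabet
  congr 1
  ext q
  exact and_congr_right fun _ => ⟨hkey _ _ c1 c2 h1 h2 c3 q, hkey _ _ h1 h2 c1 c2 c3.symm q⟩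

lemma computable_pow : Computable₂ (fun a b : ℕ => a ^ b) :=
  (Primrec₂.unpaired'.1 Nat.Primrec.pow).to_comp

/-- Corollary `computable`: there is no computable function
`f : ℤ≥1 → ℤ≥2` with `qMax(m) = O(f(m))` as `m → ∞`; i.e., the minimum alphabet size
needed to solve a network is not upper-bounded by any computable function. -/
theorem qMax_not_bounded_by_computable :
    ¬ ∃ f : ℕ → ℕ, Computable f ∧ (∀ m, 2 ≤ f m) ∧
      (fun m => (qMax m : ℝ)) =O[Filter.atTop] (fun m => (f m : ℝ)) := by
  rintro ⟨f, hf, hf2, hO⟩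
  obtain ⟨C, hC⟩ := hO.bound
  obtain ⟨N0, hN0⟩ := Filter.eventually_atTop.1 hC
  have hN : ∀ m ≥ N0, qMax m ≤ ⌈C⌉₊ * f m := by
    intro m hm
    have h := hN0 m hm
    simp only [Real.norm_natCast] at h
    have h3 : C * (f m : ℝ) ≤ (⌈C⌉₊ : ℝ) * f m :=
      mul_le_mul_of_nonneg_right (Nat.le_ceil C) (Nat.cast_nonneg _)
    exact_mod_cast h.trans h3
  let g : ℕ → ℕ := fun m => (m + 2) ^ 20
  let Kf : ℕ → ℕ := fun m => m * f (g m)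
  let F : ℕ → ℕ := fun m => 2 ^ (m + Kf m ^ Kf m)
  have hadd : Computable₂ (fun a b : ℕ => a + b) := Primrec.nat_add.to_comp
  have hmul : Computable₂ (fun a b : ℕ => a * b) := Primrec.nat_mul.to_comp
  have hg : Computable g := computable_pow.comp (hadd.comp Computable.id (Computable.const 2)) (Computable.const 20)
  have hK : Computable Kf := hmul.comp Computable.id (hf.comp hg)
  have hF : Computable F := computable_pow.comp (Computable.const 2)
    (hadd.comp Computable.id (computable_pow.comp hK hK))
  obtain ⟨A, hA⟩ := TMC.exists_family F hF
  let m := A + N0 + ⌈C⌉₊ + 2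
  obtain ⟨net, h1, h2, h3, h4⟩ := hA m
  have hsize : (A * (m + 2)) ^ 10 ≤ g m := by
    have : A * (m + 2) ≤ (m + 2) ^ 2 := by
      rw [pow_two]
      apply Nat.mul_le_mul_right
      omega
    calc (A * (m + 2)) ^ 10 ≤ ((m + 2) ^ 2) ^ 10 := Nat.pow_le_pow_left this 10
      _ = g m := by rw [← pow_mul]
  have h2' : NetworkSizeLE net (g m) := by
    obtain ⟨n, s, edges, acc, dem⟩ := net
    exact ⟨h2.1.trans hsize, h2.2.1.trans hsize, h2.2.2.trans hsize⟩
  have hmin : 2 ≤ minAlphabet net ∧ SolvableWith net (minAlphabet net) := Nat.sInf_mem h3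
  have hle : minAlphabet net ≤ qMax (g m) := le_csSup (qMax_bdd (g m)) ⟨net, h1, h2', h3, rfl⟩
  have hgm : N0 ≤ g m := by
    have : m + 2 ≤ g m := Nat.le_self_pow (by norm_num) _
    omega
  have hup := hN (g m) hgm
  have hlow := h4 _ hmin.1 hmin.2
  have hKq : Kf m < minAlphabet net := by
    by_contra hcon
    push Not at hcon
    have e1 : minAlphabet net ^ minAlphabet net ≤ Kf m ^ Kf m :=
      (Nat.pow_le_pow_left hcon _).trans (Nat.pow_le_pow_right (by omega) hcon)
    have e2 : 2 ^ (m + minAlphabet net ^ minAlphabet net) ≤ F m :=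
      Nat.pow_le_pow_right (by norm_num) (by omega)
    omega
  have hmf : ⌈C⌉₊ * f (g m) ≤ Kf m := Nat.mul_le_mul_right _ (by omega)
  omega

end
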